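/- arXiv:2409.10234 — 2 statements merged into one kernel-verified Lean document; each statement's English description precedes it below -/
import Mathlib

section
/- Let 𝔖 be an infinite-dimensional separable complex Hilbert space and let K be a closed subspace of 𝔖 whose orthogonal complement K^⊥ is infinite-dimensional. Let S be a closed symmetric operator in 𝔖 with dom S ⊆ K, dom S dense in K, and ran S ⊆ K, and assume both deficiency subspaces N_i := K ∩ (ran(S + iI))^⊥ and N_{−i} := K ∩ (ran(S − iI))^⊥ are infinite-dimensional. Then there exists a selfadjoint operator S̃ in 𝔖 extending S such that dom S̃ ∩ K = dom S and dom S̃ ∩ K^⊥ = {0}. -/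
set_option synthInstance.maxHeartbeats 1000000

open scoped ComplexInnerProductSpace

/-!
Write `N_i`, `N_{-i}` for the deficiency subspaces of `S` in `K`; with `Kᗮ` they are separable and
infinite-dimensional, hence isometric images of `H = ℓ²(ℕ)` under maps `J₁`, `J₂`, `J₃`. By
von Neumann's theory selfadjoint extensions of `S` correspond to unitaries
`W : N_i ⊕ Kᗮ → N_{-i} ⊕ Kᗮ`, the new domain being `dom S + (1 - W) (N_i ⊕ Kᗮ)`. In the coordinates
given by the `Jᵢ`, take for `W` the Cayley transform `(1 - iT) (1 + iT)⁻¹` of the bounded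
selfadjoint operator `T (a, c) = (X c, X a + ε c)` on `H ⊕ H`.

The two conditions on the domain then become conditions on `X` and `ε`. The `Kᗮ`-component of a
domain vector is `2i J₃ (X a + ε c)`, so the domain meets `K` only in `dom S` once
`X a + ε c = 0` forces `a = c = 0`: both operators are injective and their ranges meet trivially.
If the `K`-component vanishes, the independence of `dom S`, `N_i` and `N_{-i}` forces `a = 0` and
`X c = 0`, so the domain meets `Kᗮ` trivially once `X` is injective.

Such `X`, `ε` are explicit. With `z m = 2 ^ (-(m + 1))`, put `(X h) m = ∑ k, h k * z m ^ (k + 1)`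
and `(ε h) m = z m ^ (m + 1) * h m`. The value `(X h) m` is that of a power series at `z m → 0`; if
`h ≠ 0` it decays like a fixed power of `z m`, whereas `(ε c) m` decays faster than every power
(`matX_add_diagE`). The matrix of `X` is symmetric, so `X` is a bounded selfadjoint operator.

Selfadjointness of the extension `S̃` follows from symmetry together with surjectivity of `S̃ ± i`
(`isSelfAdjoint_toLinearPMap`). Surjectivity splits along
`𝔖 = ran (S ± i) ⊕ N_{±i} ⊕ Kᗮ`, which uses that `ran (S ± i)` is closed, into the facts that the
first summand is hit by `dom S` and that `1 ± iT` is surjective.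
-/

/-! ### Isometries from the sequence space -/

theorem exists_isometry_range_eq {E : Type*} [NormedAddCommGroup E] [InnerProductSpace ℂ E]
    [TopologicalSpace.SeparableSpace E] (M : Submodule ℂ E) [CompleteSpace M]
    (hM : ¬ FiniteDimensional ℂ M) :
    ∃ J : lp (fun _ : ℕ => ℂ) 2 →ₗᵢ[ℂ] E, LinearMap.range J.toLinearMap = M := by
  obtain ⟨w, b, hb⟩ := exists_hilbertBasis ℂ M
  have hc : Countable w := by
    have : TopologicalSpace.SeparableSpace M := by
      have := UniformSpace.secondCountable_of_separable E
      infer_instance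
    refine Pairwise.countable_of_isOpen_disjoint (s := fun i : w => Metric.ball (b i) (1 / 2))
      (fun i j hij => ?_) (fun i => Metric.isOpen_ball)
      (fun i => ⟨b i, Metric.mem_ball_self (by norm_num)⟩)
    refine Metric.ball_disjoint_ball ?_
    have h1 : ‖b i - b j‖ ^ 2 = 2 := by
      rw [@norm_sub_sq ℂ, b.orthonormal.1, b.orthonormal.1, b.orthonormal.2 hij]
      norm_num
    rw [dist_eq_norm]
    nlinarith [norm_nonneg (b i - b j)]
  have hi : Infinite w := by
    by_contra h
    rw [not_infinite_iff_finite] at h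
    have := Fintype.ofFinite w
    exact hM (Module.Basis.finiteDimensional_of_finite b.toOrthonormalBasis.toBasis)
  obtain ⟨e⟩ : Nonempty (ℕ ≃ w) := nonempty_equiv_of_countable
  let b' : HilbertBasis ℕ ℂ M := HilbertBasis.mk (v := b ∘ e)
    (b.orthonormal.comp e e.injective) (by
      rw [e.surjective.range_comp, b.dense_span])
  refine ⟨M.subtypeₗᵢ.comp b'.repr.symm.toLinearIsometry, ?_⟩
  ext x
  constructor
  · rintro ⟨y, rfl⟩
    exact (b'.repr.symm y).2
  · intro hx
    exact ⟨b'.repr ⟨x, hx⟩, by simp⟩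

/-! ### Two operators on `ℓ²` whose ranges meet trivially -/

/-- The entry `2 ^ (-(m + 1) (k + 1)) = z m ^ (k + 1)`, where `z m = 2 ^ (-(m + 1))`, of the matrix
of `X`. -/
noncomputable def vanderMat (m k : ℕ) : ℝ := (1 / 2) ^ ((m + 1) * (k + 1))

theorem vanderMat_nonneg (m k : ℕ) : 0 ≤ vanderMat m k := by
  unfold vanderMat; positivity

theorem vanderMat_symm (m k : ℕ) : vanderMat m k = vanderMat k m := by
  unfold vanderMat; rw [mul_comm]

theorem vanderMat_le (m k : ℕ) : vanderMat m k ≤ (1 / 2) ^ m * (1 / 2) ^ k := by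
  rw [vanderMat, ← pow_add]
  exact pow_le_pow_of_le_one (by norm_num) (by norm_num) (by nlinarith)

theorem norm_vanderMat_mul_le (h : lp (fun _ : ℕ => ℂ) 2) (m k : ℕ) :
    ‖(vanderMat m k : ℂ) * h k‖ ≤ (1 / 2) ^ m * ‖h‖ * (1 / 2) ^ k := by
  rw [norm_mul, Complex.norm_real, Real.norm_of_nonneg (vanderMat_nonneg m k)]
  calc vanderMat m k * ‖h k‖ ≤ ((1 / 2) ^ m * (1 / 2) ^ k) * ‖h‖ :=
        mul_le_mul (vanderMat_le m k) (lp.norm_apply_le_norm (by norm_num) h k) (norm_nonneg _)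
          (by positivity)
    _ = _ := by ring

theorem summable_vanderMat_mul (h : lp (fun _ : ℕ => ℂ) 2) (m : ℕ) :
    Summable fun k => (vanderMat m k : ℂ) * h k :=
  Summable.of_norm_bounded (summable_geometric_two.mul_left _) (norm_vanderMat_mul_le h m)

theorem norm_tsum_vanderMat_le (h : lp (fun _ : ℕ => ℂ) 2) (m : ℕ) :
    ‖∑' k, (vanderMat m k : ℂ) * h k‖ ≤ 2 * ‖h‖ * (1 / 2) ^ m := by
  have := tsum_of_norm_bounded (hasSum_geometric_two.mul_left ((1 / 2) ^ m * ‖h‖))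
    (norm_vanderMat_mul_le h m)
  linarith

/-- The operator `X` on `ℓ²` with matrix `vanderMat`: it samples the power series
`∑ k, h k * z ^ (k + 1)` at the points `z = 2 ^ (-(m + 1))`. -/
noncomputable def matX : lp (fun _ : ℕ => ℂ) 2 →ₗ[ℂ] lp (fun _ : ℕ => ℂ) 2 where
  toFun h := ⟨fun m => ∑' k, (vanderMat m k : ℂ) * h k, by
    have h1 : Memℓp (fun m => ∑' k, (vanderMat m k : ℂ) * h k) 1 := ?_
    · exact h1.of_exponent_ge (by norm_num)
    refine memℓp_gen ?_
    simp only [ENNReal.toReal_one, Real.rpow_one]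
    exact Summable.of_nonneg_of_le (fun _ => norm_nonneg _) (norm_tsum_vanderMat_le h)
      (summable_geometric_two.mul_left _)⟩
  map_add' f g := by
    ext m
    simp only [lp.coeFn_add, Pi.add_apply, mul_add]
    exact (summable_vanderMat_mul f m).tsum_add (summable_vanderMat_mul g m)
  map_smul' c f := by
    ext m
    simp only [lp.coeFn_smul, Pi.smul_apply, smul_eq_mul, RingHom.id_apply]
    rw [← tsum_mul_left]
    exact tsum_congr fun k => by ring

theorem matX_apply (h : lp (fun _ : ℕ => ℂ) 2) (m : ℕ) :
    matX h m = ∑' k, (vanderMat m k : ℂ) * h k := rfl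

theorem matX_symm (f g : lp (fun _ : ℕ => ℂ) 2) : ⟪matX f, g⟫ = ⟪f, matX g⟫ := by
  have hs : Summable fun p : ℕ × ℕ => (vanderMat p.1 p.2 : ℂ) * (star (f p.2) * g p.1) := by
    have h2 : Summable fun p : ℕ × ℕ => (‖f‖ * ‖g‖) * ((1 / 2 : ℝ) ^ p.1 * (1 / 2 : ℝ) ^ p.2) :=
      (summable_geometric_two.mul_of_nonneg summable_geometric_two
        (fun _ => by positivity) (fun _ => by positivity)).mul_left _
    refine Summable.of_norm_bounded h2 fun p => ?_
    rw [norm_mul, Complex.norm_real, Real.norm_of_nonneg (vanderMat_nonneg _ _), norm_mul, norm_star,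
      mul_comm]
    exact mul_le_mul (mul_le_mul (lp.norm_apply_le_norm (by norm_num) f _)
      (lp.norm_apply_le_norm (by norm_num) g _) (norm_nonneg _) (norm_nonneg _)) (vanderMat_le _ _)
      (vanderMat_nonneg _ _) (by positivity)
  rw [lp.inner_eq_tsum, lp.inner_eq_tsum]
  have h1 : ∀ m, ⟪matX f m, g m⟫ = ∑' k, (vanderMat m k : ℂ) * (star (f k) * g m) := fun m => by
    rw [matX_apply, RCLike.inner_apply, ← Complex.star_def, tsum_star, ← tsum_mul_left]
    exact tsum_congr fun k => by simp; ring
  have h2 : ∀ k, ⟪f k, matX g k⟫ = ∑' m, (vanderMat m k : ℂ) * (star (f k) * g m) := fun k => by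
    rw [matX_apply, RCLike.inner_apply, ← Complex.star_def, ← tsum_mul_right]
    exact tsum_congr fun m => by rw [vanderMat_symm m k]; ring
  simp_rw [h1, h2]
  exact (Summable.tsum_comm (f := fun m k => (vanderMat m k : ℂ) * (star (f k) * g m)) hs).symm

/-- The diagonal operator `ε` on `ℓ²` with entries `2 ^ (-(m + 1) ^ 2)`, the diagonal of the matrix
of `X`. -/
noncomputable def diagE : lp (fun _ : ℕ => ℂ) 2 →ₗ[ℂ] lp (fun _ : ℕ => ℂ) 2 where
  toFun h := ⟨fun m => (vanderMat m m : ℂ) * h m, by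
    refine (lp.memℓp h).mono' fun m => ?_
    rw [norm_mul, Complex.norm_real, Real.norm_of_nonneg (vanderMat_nonneg m m)]
    refine mul_le_of_le_one_left (norm_nonneg _) (pow_le_one₀ (by norm_num) (by norm_num))⟩
  map_add' f g := by
    ext m
    exact mul_add _ _ _
  map_smul' c f := by
    ext m
    simp [mul_left_comm]

theorem diagE_apply (h : lp (fun _ : ℕ => ℂ) 2) (m : ℕ) : diagE h m = (vanderMat m m : ℂ) * h m := rfl

theorem diagE_symm (f g : lp (fun _ : ℕ => ℂ) 2) : ⟪diagE f, g⟫ = ⟪f, diagE g⟫ := by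
  rw [lp.inner_eq_tsum, lp.inner_eq_tsum]
  refine tsum_congr fun m => ?_
  rw [diagE_apply, diagE_apply, RCLike.inner_apply, RCLike.inner_apply, map_mul, Complex.conj_ofReal]
  ring

theorem diagE_injective {c : lp (fun _ : ℕ => ℂ) 2} (h : diagE c = 0) : c = 0 := by
  ext m
  have h1 : diagE c m = 0 := by rw [h]; rfl
  rw [diagE_apply] at h1
  refine (mul_eq_zero.1 h1).resolve_left ?_
  change (vanderMat m m : ℂ) ≠ 0
  rw [Complex.ofReal_ne_zero, vanderMat]
  positivity

/-- `X` and `ε` are injective with ranges meeting only in `0`. The coefficients of `a` are shown to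
vanish one after the other: the first one, `a k`, contributes `a k * z m ^ (k + 1)` to `(X a) m`,
and everything else in the relation is `O(z m ^ (k + 1) * 2 ^ (-m))`. -/
theorem matX_add_diagE {a c : lp (fun _ : ℕ => ℂ) 2} (h : matX a + diagE c = 0) :
    a = 0 ∧ c = 0 := by
  have ha : a = 0 := by
    ext k
    induction k using Nat.strong_induction_on with
    | _ k ih =>
    simp only [lp.coeFn_zero, Pi.zero_apply] at ih ⊢
    have key : ∀ m, k + 1 ≤ m → ‖a k‖ ≤ (2 * ‖a‖ + ‖c‖) * (1 / 2) ^ m := by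
      intro m hm
      have h0 : matX a m + diagE c m = 0 := by
        rw [← Pi.add_apply, ← lp.coeFn_add, h]; rfl
      rw [matX_apply, diagE_apply, ← (summable_vanderMat_mul a m).sum_add_tsum_nat_add (k + 1),
        Finset.sum_range_succ, Finset.sum_eq_zero (fun j hj => by
          rw [ih j (Finset.mem_range.1 hj), mul_zero]), zero_add] at h0
      have hk : 0 < vanderMat m k := by unfold vanderMat; positivity
      have htail : ‖∑' j, (vanderMat m (j + (k + 1)) : ℂ) * a (j + (k + 1))‖ ≤
          (vanderMat m k * (1 / 2) ^ m * ‖a‖) * 2 := by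
        refine tsum_of_norm_bounded (hasSum_geometric_two.mul_left _) fun j => ?_
        rw [norm_mul, Complex.norm_real, Real.norm_of_nonneg (vanderMat_nonneg _ _)]
        have : vanderMat m (j + (k + 1)) ≤ vanderMat m k * (1 / 2) ^ m * (1 / 2) ^ j := by
          rw [vanderMat, vanderMat, ← pow_add, ← pow_add]
          exact pow_le_pow_of_le_one (by norm_num) (by norm_num) (by nlinarith)
        calc _ ≤ (vanderMat m k * (1 / 2) ^ m * (1 / 2) ^ j) * ‖a‖ :=
              mul_le_mul this (lp.norm_apply_le_norm (by norm_num) a _) (norm_nonneg _)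
                (by positivity)
          _ = _ := by ring
      have hdiag : ‖(vanderMat m m : ℂ) * c m‖ ≤ vanderMat m k * (1 / 2) ^ m * ‖c‖ := by
        rw [norm_mul, Complex.norm_real, Real.norm_of_nonneg (vanderMat_nonneg _ _)]
        refine mul_le_mul ?_ (lp.norm_apply_le_norm (by norm_num) c _) (norm_nonneg _)
          (by positivity)
        rw [vanderMat, vanderMat, ← pow_add]
        exact pow_le_pow_of_le_one (by norm_num) (by norm_num) (by nlinarith)
      have h3 : (vanderMat m k : ℂ) * a k =
          -(∑' j, (vanderMat m (j + (k + 1)) : ℂ) * a (j + (k + 1)))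
          - (vanderMat m m : ℂ) * c m := by linear_combination h0
      have h4 : vanderMat m k * ‖a k‖ ≤ vanderMat m k * ((2 * ‖a‖ + ‖c‖) * (1 / 2) ^ m) := by
        calc vanderMat m k * ‖a k‖ = ‖(vanderMat m k : ℂ) * a k‖ := by
              rw [norm_mul, Complex.norm_real, Real.norm_of_nonneg hk.le]
          _ ≤ _ := by
              rw [h3]
              refine (norm_sub_le _ _).trans ?_
              rw [norm_neg]
              linarith
      exact le_of_mul_le_mul_left h4 hk
    have hlim : Filter.Tendsto (fun m : ℕ => (2 * ‖a‖ + ‖c‖) * (1 / 2 : ℝ) ^ m) Filter.atTop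
        (nhds 0) := by
      simpa using (tendsto_pow_atTop_nhds_zero_of_lt_one (r := (1 / 2 : ℝ)) (by norm_num)
        (by norm_num)).const_mul (2 * ‖a‖ + ‖c‖)
    have := ge_of_tendsto hlim (Filter.eventually_atTop.2 ⟨k + 1, key⟩)
    exact norm_le_zero_iff.1 this
  refine ⟨ha, diagE_injective ?_⟩
  rw [ha, map_zero, zero_add] at h
  exact h

/-- `1 + σ T` is surjective for symmetric `T` and imaginary `σ`: the number `-σ⁻¹` is not real, so it
lies in the resolvent set of `T`, which is bounded because it is everywhere defined. -/
theorem exists_add_smul_symm {V : Type*} [NormedAddCommGroup V] [InnerProductSpace ℂ V]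
    [CompleteSpace V] (T : V →ₗ[ℂ] V) (hT : T.IsSymmetric) (σ : ℂ) (hσ : σ.re = 0)
    (y : V) : ∃ g, g + σ • T g = y := by
  rcases eq_or_ne σ 0 with rfl | h0
  · exact ⟨y, by simp⟩
  let A : V →L[ℂ] V := ⟨T, hT.continuous⟩
  have hA : IsSelfAdjoint A := ContinuousLinearMap.isSelfAdjoint_iff_isSymmetric.mpr hT
  have hσ' : -σ⁻¹ ∉ spectrum ℂ A := fun hmem => by
    have h1 := hA.mem_spectrum_eq_re hmem
    have h2 : (-σ⁻¹).re = 0 := by simp [Complex.inv_re, hσ]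
    rw [h2] at h1
    exact h0 (by simpa using h1)
  rw [spectrum.notMem_iff] at hσ'
  obtain ⟨u, hu⟩ := hσ'
  refine ⟨(↑u⁻¹ : V →L[ℂ] V) (-σ⁻¹ • y), ?_⟩
  have h1 : (u : V →L[ℂ] V) ((↑u⁻¹ : V →L[ℂ] V) (-σ⁻¹ • y)) = -σ⁻¹ • y := by
    change ((u : V →L[ℂ] V) * (↑u⁻¹ : V →L[ℂ] V)) (-σ⁻¹ • y) = -σ⁻¹ • y
    rw [u.mul_inv]
    rfl
  set g := (↑u⁻¹ : V →L[ℂ] V) (-σ⁻¹ • y)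
  rw [hu] at h1
  have h2 : -σ⁻¹ • g - T g = -σ⁻¹ • y := h1
  have h3 : (-σ) • (-σ⁻¹ • g - T g) = (-σ) • (-σ⁻¹ • y) := by rw [h2]
  rw [smul_sub, smul_smul, smul_smul, neg_mul_neg, mul_inv_cancel₀ h0, one_smul, one_smul,
    neg_smul, sub_neg_eq_add] at h3
  exact h3

/-- Surjectivity of `1 + σ T` on `ℓ² ⊕ ℓ²` for imaginary `σ` and `T (a, c) = (X c, X a + ε c)`. -/
theorem exists_block_solution (σ : ℂ) (hσ : σ.re = 0) (p q : lp (fun _ : ℕ => ℂ) 2) :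
    ∃ a c, a + σ • matX c = p ∧ c + σ • (matX a + diagE c) = q := by
  let T : WithLp 2 (lp (fun _ : ℕ => ℂ) 2 × lp (fun _ : ℕ => ℂ) 2) →ₗ[ℂ]
      WithLp 2 (lp (fun _ : ℕ => ℂ) 2 × lp (fun _ : ℕ => ℂ) 2) :=
    { toFun := fun v => WithLp.toLp 2 (matX v.snd, matX v.fst + diagE v.snd)
      map_add' := fun v w => by
        apply (WithLp.ofLp_injective 2)
        ext1
        · simp
        · simp only [WithLp.add_fst, WithLp.add_snd, map_add, WithLp.ofLp_add, Prod.snd_add]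
          abel
      map_smul' := fun r v => by
        apply (WithLp.ofLp_injective 2)
        ext1 <;> simp }
  have hT : T.IsSymmetric := fun v w => by
    change ⟪matX v.snd, w.fst⟫ + ⟪matX v.fst + diagE v.snd, w.snd⟫ =
      ⟪v.fst, matX w.snd⟫ + ⟪v.snd, matX w.fst + diagE w.snd⟫
    simp only [inner_add_left, inner_add_right, matX_symm, diagE_symm]
    ring
  obtain ⟨g, hg⟩ := exists_add_smul_symm T hT σ hσ (WithLp.toLp 2 (p, q))
  refine ⟨g.fst, g.snd, ?_, ?_⟩
  · simpa [T] using congrArg WithLp.fst hg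
  · simpa [T] using congrArg WithLp.snd hg

/-! ### Selfadjointness and von Neumann's decomposition -/

/-- A symmetric operator `A`, given by its graph `G`, with `A + i` and `A - i` surjective is
selfadjoint. Density of the domain is part of the conclusion. -/
theorem isSelfAdjoint_toLinearPMap {E : Type*} [NormedAddCommGroup E] [InnerProductSpace ℂ E]
    [CompleteSpace E] (G : Submodule ℂ (E × E)) (hG : ∀ p ∈ G, p.1 = 0 → p.2 = 0)
    (hsym : ∀ p ∈ G, ∀ q ∈ G, ⟪p.2, q.1⟫ = ⟪p.1, q.2⟫)
    (hplus : ∀ y, ∃ p ∈ G, p.2 + Complex.I • p.1 = y)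
    (hminus : ∀ y, ∃ p ∈ G, p.2 - Complex.I • p.1 = y) :
    IsSelfAdjoint G.toLinearPMap := by
  have hgr : G.toLinearPMap.graph = G := G.toLinearPMap_graph_eq (fun p hp h => hG p hp h)
  set A := G.toLinearPMap with hA
  have hmem : ∀ x : A.domain, ((x : E), A x) ∈ G := fun x => by
    rw [← hgr]; exact A.mem_graph x
  have hdom : ∀ p ∈ G, ∃ x : A.domain, (x : E) = p.1 ∧ A x = p.2 := fun p hp => by
    rw [← hgr, LinearPMap.mem_graph_iff] at hp; exact hp
  -- A vector orthogonal to the range of `A - i` vanishes.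
  have hzero : ∀ z : E, (∀ p ∈ G, ⟪z, p.2⟫ = Complex.I * ⟪z, p.1⟫) → z = 0 := by
    intro z hz
    obtain ⟨p, hp, hpz⟩ := hminus z
    rw [← inner_self_eq_zero (𝕜 := ℂ)]
    nth_rewrite 2 [← hpz]
    rw [inner_sub_right, inner_smul_right, hz p hp, sub_self]
  have hd : Dense (A.domain : Set E) := by
    rw [Submodule.dense_iff_topologicalClosure_eq_top, Submodule.topologicalClosure_eq_top_iff,
      Submodule.eq_bot_iff]
    intro y hy
    obtain ⟨q, hq, rfl⟩ := hplus y
    have hq1 : q.1 = 0 := by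
      refine hzero _ fun p hp => ?_
      obtain ⟨x, hx, -⟩ := hdom p hp
      have h1 := (Submodule.mem_orthogonal' _ _).1 hy x x.2
      rw [hx, inner_add_left, inner_smul_left, Complex.conj_I, hsym q hq p hp] at h1
      linear_combination h1
    rw [hG q hq hq1, hq1, smul_zero, add_zero]
  rw [LinearPMap.isSelfAdjoint_def]
  refine le_antisymm ?_ (LinearPMap.IsFormalAdjoint.le_adjoint hd
    fun x y => hsym _ (hmem x) _ (hmem y))
  refine LinearPMap.le_of_le_graph fun y hy => ?_
  rw [hgr]
  rw [LinearPMap.mem_graph_iff] at hy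
  obtain ⟨y0, hy1, hy2⟩ := hy
  obtain ⟨q, hq, hqy⟩ := hplus (y.2 + Complex.I • y.1)
  have h2 : y.2 - q.2 = -(Complex.I • (y.1 - q.1)) := by
    linear_combination (norm := module) (-1 : ℂ) • hqy
  have h1 : y.1 - q.1 = 0 := by
    refine hzero _ fun p hp => ?_
    obtain ⟨x, hx, hAx⟩ := hdom p hp
    have h3 := LinearPMap.adjoint_isFormalAdjoint hd y0 x
    rw [hy1, hy2, hx, hAx] at h3
    have h4 : ⟪y.2 - q.2, p.1⟫ = ⟪y.1 - q.1, p.2⟫ := by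
      rw [inner_sub_left, inner_sub_left, h3, hsym q hq p hp]
    rw [← h4, h2, inner_neg_left, inner_smul_left, Complex.conj_I]
    ring
  rw [h1, smul_zero, neg_zero, sub_eq_zero] at h2
  rw [sub_eq_zero] at h1
  have : y = q := Prod.ext h1 h2
  rwa [this]

/-- `‖(S + σ) f‖ ^ 2 = ‖S f‖ ^ 2 + ‖f‖ ^ 2` for `σ = ± i`, so `S + σ` is bounded below on the graph
of `S`, which is complete. -/
theorem isClosed_range_add_smul {E : Type*} [NormedAddCommGroup E] [InnerProductSpace ℂ E]
    [CompleteSpace E] (S : E →ₗ.[ℂ] E)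
    (hsym : ∀ x y : S.domain, ⟪S x, (y : E)⟫ = ⟪(x : E), S y⟫) (hclosed : S.IsClosed)
    (σ : ℂ) (hσ : σ.re = 0) (hσ1 : ‖σ‖ = 1) :
    IsClosed (LinearMap.range (S.toFun + σ • S.domain.subtype) : Set E) := by
  have : CompleteSpace S.graph := hclosed.isComplete.completeSpace_coe
  let φ : S.graph →L[ℂ] E :=
    (ContinuousLinearMap.snd ℂ E E + σ • ContinuousLinearMap.fst ℂ E E).comp S.graph.subtypeL
  have hb : ∀ p : S.graph, ‖p‖ ≤ ‖φ p‖ := by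
    rintro ⟨⟨x, y⟩, hp⟩
    obtain ⟨x, rfl, rfl⟩ := (LinearPMap.mem_graph_iff S).1 hp
    change max ‖(x : E)‖ ‖S x‖ ≤ ‖S x + σ • (x : E)‖
    have him : (⟪S x, (x : E)⟫).im = 0 := by
      have h1 := inner_conj_symm (S x) (x : E) (𝕜 := ℂ)
      rw [← hsym] at h1
      exact Complex.conj_eq_iff_im.1 h1
    have hn : ‖S x + σ • (x : E)‖ ^ 2 = ‖S x‖ ^ 2 + ‖(x : E)‖ ^ 2 := by
      rw [@norm_add_sq ℂ, norm_smul, hσ1, inner_smul_right]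
      simp [hσ, him]
    refine max_le ?_ ?_ <;> refine le_of_sq_le_sq ?_ (norm_nonneg _) <;> rw [hn] <;>
      nlinarith [sq_nonneg ‖S x‖, sq_nonneg ‖(x : E)‖]
  have ha : AntilipschitzWith 1 φ := φ.antilipschitz_of_bound (by simpa using hb)
  have hr : (LinearMap.range (S.toFun + σ • S.domain.subtype) : Set E) = Set.range φ := by
    ext y
    constructor
    · rintro ⟨x, rfl⟩
      exact ⟨⟨_, S.mem_graph x⟩, rfl⟩
    · rintro ⟨⟨⟨x, y⟩, hp⟩, rfl⟩
      obtain ⟨x, rfl, rfl⟩ := (LinearPMap.mem_graph_iff S).1 hp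
      exact ⟨x, rfl⟩
  rw [hr]
  exact ha.isClosed_range φ.uniformContinuous

/-- `K = ran (S + σ) + N_σ` for `σ = ± i`. -/
theorem exists_add_deficiency {E : Type*} [NormedAddCommGroup E] [InnerProductSpace ℂ E]
    [CompleteSpace E] (K : Submodule ℂ E) (S : E →ₗ.[ℂ] E)
    (hsym : ∀ x y : S.domain, ⟪S x, (y : E)⟫ = ⟪(x : E), S y⟫) (hclosed : S.IsClosed)
    (hdom : S.domain ≤ K) (hran : ∀ x : S.domain, S x ∈ K)
    (σ : ℂ) (hσ : σ.re = 0) (hσ1 : ‖σ‖ = 1) (y : E) (hy : y ∈ K) :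
    ∃ f : S.domain, ∃ n ∈ K ⊓ (LinearMap.range (S.toFun + σ • S.domain.subtype))ᗮ,
      S f + σ • (f : E) + n = y := by
  have hcl := isClosed_range_add_smul S hsym hclosed σ hσ hσ1
  set R := LinearMap.range (S.toFun + σ • S.domain.subtype)
  have : CompleteSpace R := hcl.isComplete.completeSpace_coe
  have hR : R ≤ K := by
    rintro _ ⟨f, rfl⟩
    exact K.add_mem (hran f) (K.smul_mem _ (hdom f.2))
  rw [← Submodule.sup_orthogonal_inf_of_hasOrthogonalProjection hR] at hy
  obtain ⟨_, ⟨f, rfl⟩, n, hn, rfl⟩ := Submodule.mem_sup.1 hy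
  exact ⟨f, n, hn.symm, rfl⟩

/-- Vectors `n` of the deficiency subspace satisfy `S* n = σ n`, in weak form. -/
theorem inner_deficiency {E : Type*} [NormedAddCommGroup E] [InnerProductSpace ℂ E]
    (S : E →ₗ.[ℂ] E) (σ : ℂ) (hσ : σ.re = 0) {n : E}
    (hn : n ∈ (LinearMap.range (S.toFun + σ • S.domain.subtype))ᗮ) (f : S.domain) :
    ⟪S f, n⟫ = σ * ⟪(f : E), n⟫ ∧ ⟪n, S f⟫ = -σ * ⟪n, (f : E)⟫ := by
  have hc : (starRingEnd ℂ) σ = -σ := by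
    apply Complex.ext <;> simp [hσ]
  have h1 : ⟪n, S f + σ • (f : E)⟫ = 0 := (Submodule.mem_orthogonal' _ _).1 hn _ ⟨f, rfl⟩
  have h2 : ⟪S f + σ • (f : E), n⟫ = 0 := (Submodule.mem_orthogonal _ _).1 hn _ ⟨f, rfl⟩
  rw [inner_add_right, inner_smul_right] at h1
  rw [inner_add_left, inner_smul_left, hc] at h2
  exact ⟨by linear_combination h2, by linear_combination h1⟩

/-- Independence of `dom S`, `N_i` and `N_{-i}`. Applying `S*` to `f + n - m = 0` gives
`S f + i n + i m = 0`; the two relations combine to `(S + i) f = -2i n` and `(S - i) f = -2i m`,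
whose sides are orthogonal. -/
theorem eq_zero_of_add_deficiency {E : Type*} [NormedAddCommGroup E] [InnerProductSpace ℂ E]
    (K : Submodule ℂ E) (S : E →ₗ.[ℂ] E)
    (hsym : ∀ x y : S.domain, ⟪S x, (y : E)⟫ = ⟪(x : E), S y⟫)
    (hdomK : S.domain.topologicalClosure = K) (hran : ∀ x : S.domain, S x ∈ K)
    {n m : E} (f : S.domain)
    (hn : n ∈ K ⊓ (LinearMap.range (S.toFun + Complex.I • S.domain.subtype))ᗮ)
    (hm : m ∈ K ⊓ (LinearMap.range (S.toFun + (-Complex.I) • S.domain.subtype))ᗮ)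
    (h : (f : E) + n - m = 0) : n = 0 ∧ m = 0 := by
  set w := S f + Complex.I • n + Complex.I • m with hw
  have hwK : w ∈ K := K.add_mem (K.add_mem (hran f) (K.smul_mem _ hn.1)) (K.smul_mem _ hm.1)
  -- `w` is `S* (f + n - m)`; since `S*` acts within `K` and `dom S` is dense there, `w = 0`.
  have hw1 : w ∈ S.domainᗮ := by
    rw [Submodule.mem_orthogonal]
    intro g hg
    have h1 := hsym ⟨g, hg⟩ f
    have h2 := (inner_deficiency S Complex.I (by simp) hn.2 ⟨g, hg⟩).1
    have h3 := (inner_deficiency S (-Complex.I) (by simp) hm.2 ⟨g, hg⟩).1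
    have h4 : ⟪S ⟨g, hg⟩, (f : E) + n - m⟫ = 0 := by rw [h, inner_zero_right]
    rw [inner_sub_right, inner_add_right] at h4
    rw [hw, inner_add_right, inner_add_right, inner_smul_right, inner_smul_right]
    linear_combination h4 - h1 - h2 + h3
  have hw0 : w = 0 := by
    rw [← hdomK] at hwK
    rw [← Submodule.orthogonal_closure] at hw1
    exact inner_self_eq_zero.1 ((Submodule.mem_orthogonal _ _).1 hw1 w hwK)
  rw [hw] at hw0
  constructor
  · have h1 : S f + Complex.I • (f : E) = -(2 * Complex.I) • n := by
      linear_combination (norm := module) hw0 + Complex.I • h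
    have h2 : ⟪S f + Complex.I • (f : E), n⟫ = 0 :=
      (Submodule.mem_orthogonal _ _).1 hn.2 _ ⟨f, rfl⟩
    rw [h1, inner_smul_left] at h2
    exact inner_self_eq_zero.1 ((mul_eq_zero.1 h2).resolve_left (by simp))
  · have h1 : S f + (-Complex.I) • (f : E) = -(2 * Complex.I) • m := by
      linear_combination (norm := module) hw0 - Complex.I • h
    have h2 : ⟪S f + (-Complex.I) • (f : E), m⟫ = 0 :=
      (Submodule.mem_orthogonal _ _).1 hm.2 _ ⟨f, rfl⟩
    rw [h1, inner_smul_left] at h2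
    exact inner_self_eq_zero.1 ((mul_eq_zero.1 h2).resolve_left (by simp))

/-! ### The extension -/

/-- Let `𝔖` be an infinite-dimensional separable complex Hilbert space, `K` a
closed subspace with infinite-dimensional orthogonal complement, and `S` a closed symmetric
operator in `𝔖` with `dom S ⊆ K` dense in `K` and `ran S ⊆ K`, whose deficiency subspaces
`N_i = K ∩ (ran (S + iI))ᗮ` and `N_{-i} = K ∩ (ran (S - iI))ᗮ` are both infinite-dimensional.
Then there exists a selfadjoint extension `S̃` of `S` in `𝔖` with `dom S̃ ∩ K = dom S` and
`dom S̃ ∩ Kᗮ = {0}`. -/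
theorem exists_selfAdjoint_extension_second_kind
    {𝔖 : Type*} [NormedAddCommGroup 𝔖] [InnerProductSpace ℂ 𝔖] [CompleteSpace 𝔖]
    [TopologicalSpace.SeparableSpace 𝔖] (hinf : ¬ FiniteDimensional ℂ 𝔖)
    (K : Submodule ℂ 𝔖) [CompleteSpace K] (hKperp : ¬ FiniteDimensional ℂ ↥Kᗮ)
    (S : 𝔖 →ₗ.[ℂ] 𝔖)
    (hsym : ∀ x y : S.domain, ⟪S x, (y : 𝔖)⟫ = ⟪(x : 𝔖), S y⟫)
    (hclosed : S.IsClosed)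
    (hdomK : S.domain.topologicalClosure = K)
    (hranK : ∀ x : S.domain, S x ∈ K)
    (hNi : ¬ FiniteDimensional ℂ
      ↥(K ⊓ (LinearMap.range (S.toFun + Complex.I • S.domain.subtype))ᗮ))
    (hNmi : ¬ FiniteDimensional ℂ
      ↥(K ⊓ (LinearMap.range (S.toFun - Complex.I • S.domain.subtype))ᗮ)) :
    ∃ St : 𝔖 →ₗ.[ℂ] 𝔖, S ≤ St ∧ IsSelfAdjoint St ∧
      St.domain ⊓ K = S.domain ∧ St.domain ⊓ Kᗮ = ⊥ := by
  have hdK : S.domain ≤ K := hdomK ▸ S.domain.le_topologicalClosure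
  rw [show S.toFun - Complex.I • S.domain.subtype
    = S.toFun + (-Complex.I) • S.domain.subtype by rw [neg_smul, sub_eq_add_neg]] at hNmi
  have hKcl : IsClosed (K : Set 𝔖) := hdomK ▸ S.domain.isClosed_topologicalClosure
  have hNcl : ∀ R : Submodule ℂ 𝔖, CompleteSpace ↥(K ⊓ Rᗮ) := fun R =>
    (hKcl.inter R.isClosed_orthogonal).isComplete.completeSpace_coe
  have := hNcl (LinearMap.range (S.toFun + Complex.I • S.domain.subtype))
  have := hNcl (LinearMap.range (S.toFun + (-Complex.I) • S.domain.subtype))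
  obtain ⟨J₁, hJ₁⟩ := exists_isometry_range_eq _ hNi
  obtain ⟨J₂, hJ₂⟩ := exists_isometry_range_eq _ hNmi
  obtain ⟨J₃, hJ₃⟩ := exists_isometry_range_eq _ hKperp
  have hm₁ : ∀ u, J₁ u ∈ K ⊓ (LinearMap.range (S.toFun + Complex.I • S.domain.subtype))ᗮ :=
    fun u => hJ₁ ▸ ⟨u, rfl⟩
  have hm₂ : ∀ u, J₂ u ∈ K ⊓ (LinearMap.range (S.toFun + (-Complex.I) • S.domain.subtype))ᗮ :=
    fun u => hJ₂ ▸ ⟨u, rfl⟩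
  have hm₃ : ∀ u, J₃ u ∈ Kᗮ := fun u => hJ₃ ▸ ⟨u, rfl⟩
  have h₁ : ∀ f u, _ := fun f u => inner_deficiency S Complex.I (by simp) (hm₁ u).2 f
  have h₂ : ∀ f u, _ := fun f u => inner_deficiency S (-Complex.I) (by simp) (hm₂ u).2 f
  have h₃ : ∀ k ∈ K, ∀ u, ⟪k, J₃ u⟫ = 0 := fun k hk u =>
    (Submodule.mem_orthogonal _ _).1 (hm₃ u) k hk
  have h₃' : ∀ k ∈ K, ∀ u, ⟪J₃ u, k⟫ = 0 := fun k hk u =>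
    (Submodule.mem_orthogonal' _ _).1 (hm₃ u) k hk
  -- With `T (a, c) = (X c, X a + ε c)`, the range of `Φ` is the graph of the extension whose Cayley
  -- transform maps `(J₁ ⊕ J₃) (1 + iT) g` to `(J₂ ⊕ J₃) (1 - iT) g`, where `g = (a, c)`.
  let Φ : (S.domain × lp (fun _ : ℕ => ℂ) 2 × lp (fun _ : ℕ => ℂ) 2) →ₗ[ℂ] 𝔖 × 𝔖 :=
    { toFun := fun v =>
        ((v.1 : 𝔖) + J₁ (v.2.1 + Complex.I • matX v.2.2) - J₂ (v.2.1 - Complex.I • matX v.2.2)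
            + (2 * Complex.I) • J₃ (matX v.2.1 + diagE v.2.2),
          S v.1 + Complex.I • J₁ (v.2.1 + Complex.I • matX v.2.2)
            + Complex.I • J₂ (v.2.1 - Complex.I • matX v.2.2) + (2 * Complex.I) • J₃ v.2.2)
      map_add' := fun v w => by
        ext1 <;> simp only [Prod.fst_add, Prod.snd_add, map_add, map_sub, map_smul,
          Submodule.coe_add, LinearPMap.map_add] <;> module
      map_smul' := fun r v => by
        ext1 <;> simp only [Prod.smul_fst, Prod.smul_snd, map_add, map_sub, map_smul,
          Submodule.coe_smul, LinearPMap.map_smul, RingHom.id_apply] <;> module }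
  have hΦ : ∀ f a c, Φ (f, a, c) =
      ((f : 𝔖) + J₁ (a + Complex.I • matX c) - J₂ (a - Complex.I • matX c)
            + (2 * Complex.I) • J₃ (matX a + diagE c),
          S f + Complex.I • J₁ (a + Complex.I • matX c)
            + Complex.I • J₂ (a - Complex.I • matX c) + (2 * Complex.I) • J₃ c) :=
    fun f a c => rfl
  have hKpart : ∀ (f : S.domain) u v, (f : 𝔖) + J₁ u - J₂ v ∈ K := fun f u v =>
    K.sub_mem (K.add_mem (hdK f.2) (hm₁ u).1) (hm₂ v).1
  -- A vector of the new domain lying in `K` comes from the domain of `S`.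
  have hinK : ∀ f a c, (Φ (f, a, c)).1 ∈ K → a = 0 ∧ c = 0 := by
    intro f a c h
    rw [hΦ] at h
    have h1 := (Submodule.add_mem_iff_right K (hKpart f _ _)).1 h
    have h2 : (2 * Complex.I) • J₃ (matX a + diagE c) = 0 :=
      inner_self_eq_zero.1 ((Submodule.mem_orthogonal _ _).1 (Kᗮ.smul_mem _ (hm₃ _)) _ h1)
    rw [smul_eq_zero_iff_right (by simp), map_eq_zero_iff _ J₃.injective] at h2
    exact matX_add_diagE h2
  have hsing : ∀ p ∈ LinearMap.range Φ, p.1 = 0 → p.2 = 0 := by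
    rintro _ ⟨⟨f, a, c⟩, rfl⟩ h
    obtain ⟨rfl, rfl⟩ := hinK f a c (h ▸ K.zero_mem)
    rw [hΦ] at h ⊢
    simp only [map_zero, smul_zero, add_zero, sub_zero, ZeroMemClass.coe_eq_zero] at h ⊢
    rw [h, LinearPMap.map_zero]
  have hgraph : (LinearMap.range Φ).toLinearPMap.graph = LinearMap.range Φ :=
    Submodule.toLinearPMap_graph_eq _ fun p hp h => hsing p hp h
  have hmemdom : ∀ y, y ∈ (LinearMap.range Φ).toLinearPMap.domain ↔
      ∃ f a c, (Φ (f, a, c)).1 = y := by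
    intro y
    rw [LinearPMap.mem_domain_iff, hgraph]
    constructor
    · rintro ⟨z, ⟨f, a, c⟩, hv⟩
      exact ⟨f, a, c, by rw [hv]⟩
    · rintro ⟨f, a, c, rfl⟩
      exact ⟨_, ⟨f, a, c⟩, rfl⟩
  have hle : S ≤ (LinearMap.range Φ).toLinearPMap := by
    refine LinearPMap.le_of_le_graph fun p hp => ?_
    rw [hgraph]
    obtain ⟨f, hf1, hf2⟩ := (LinearPMap.mem_graph_iff S).1 hp
    refine ⟨(f, 0, 0), ?_⟩
    rw [hΦ]
    ext1 <;> simp [hf1, hf2]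
  refine ⟨(LinearMap.range Φ).toLinearPMap, hle,
    isSelfAdjoint_toLinearPMap _ hsing ?_ ?_ ?_, le_antisymm ?_ ?_, ?_⟩
  · rintro _ ⟨⟨f, a, c⟩, rfl⟩ _ ⟨⟨f', a', c'⟩, rfl⟩
    have e1 := fun u : lp (fun _ : ℕ => ℂ) 2 => (h₁ f u).1
    have e2 := fun u : lp (fun _ : ℕ => ℂ) 2 => (h₁ f' u).2
    have e3 := fun u : lp (fun _ : ℕ => ℂ) 2 => (h₂ f u).1
    have e4 := fun u : lp (fun _ : ℕ => ℂ) 2 => (h₂ f' u).2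
    have e5 := fun u v : lp (fun _ : ℕ => ℂ) 2 => h₃ _ (hm₁ u).1 v
    have e6 := fun u v : lp (fun _ : ℕ => ℂ) 2 => h₃ _ (hm₂ u).1 v
    have e7 := fun u v : lp (fun _ : ℕ => ℂ) 2 => h₃' _ (hm₁ u).1 v
    have e8 := fun u v : lp (fun _ : ℕ => ℂ) 2 => h₃' _ (hm₂ u).1 v
    simp only [hΦ, inner_add_left, inner_add_right, inner_sub_left, inner_sub_right,
      inner_smul_left, inner_smul_right, map_add, map_sub, map_smul, LinearIsometry.inner_map_map,
      h₃ _ (hdK f.2), h₃' _ (hdK f'.2), h₃ _ (hranK f), h₃' _ (hranK f'), e1, e2, e3, e4,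
      e5, e6, e7, e8, hsym f f', matX_symm, diagE_symm, map_mul, Complex.conj_I, map_ofNat]
    ring_nf
  -- In `x' + i x` the `J₂` terms cancel, which leaves `(S + i) f + 2i (J₁ ⊕ J₃) (1 + iT) (a, c)`.
  · intro y
    obtain ⟨k, hk, l, hl, rfl⟩ := K.exists_add_mem_mem_orthogonal y
    obtain ⟨f, n, hn, rfl⟩ := exists_add_deficiency K S hsym hclosed hdK hranK
      Complex.I (by simp) (by simp) k hk
    rw [← hJ₁] at hn
    rw [← hJ₃] at hl
    obtain ⟨p, rfl⟩ := hn
    obtain ⟨q, rfl⟩ := hl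
    obtain ⟨a, c, h1, h2⟩ := exists_block_solution Complex.I (by simp)
      ((2 * Complex.I)⁻¹ • p) ((2 * Complex.I)⁻¹ • q)
    refine ⟨_, ⟨(f, a, c), rfl⟩, ?_⟩
    have h1' : p = (2 * Complex.I) • (a + Complex.I • matX c) := by
      rw [h1, smul_inv_smul₀ (by simp)]
    have h2' : q = (2 * Complex.I) • (c + Complex.I • (matX a + diagE c)) := by
      rw [h2, smul_inv_smul₀ (by simp)]
    rw [hΦ, h1', h2']
    simp only [LinearIsometry.coe_toLinearMap, map_add, map_sub, map_smul]
    module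
  -- In `x' - i x` the `J₁` terms cancel, which leaves `(S - i) f + 2i (J₂ ⊕ J₃) (1 - iT) (a, c)`.
  · intro y
    obtain ⟨k, hk, l, hl, rfl⟩ := K.exists_add_mem_mem_orthogonal y
    obtain ⟨f, n, hn, rfl⟩ := exists_add_deficiency K S hsym hclosed hdK hranK
      (-Complex.I) (by simp) (by simp) k hk
    rw [← hJ₂] at hn
    rw [← hJ₃] at hl
    obtain ⟨p, rfl⟩ := hn
    obtain ⟨q, rfl⟩ := hl
    obtain ⟨a, c, h1, h2⟩ := exists_block_solution (-Complex.I) (by simp)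
      ((2 * Complex.I)⁻¹ • p) ((2 * Complex.I)⁻¹ • q)
    refine ⟨_, ⟨(f, a, c), rfl⟩, ?_⟩
    have h1' : p = (2 * Complex.I) • (a + (-Complex.I) • matX c) := by
      rw [h1, smul_inv_smul₀ (by simp)]
    have h2' : q = (2 * Complex.I) • (c + (-Complex.I) • (matX a + diagE c)) := by
      rw [h2, smul_inv_smul₀ (by simp)]
    rw [hΦ, h1', h2']
    simp only [LinearIsometry.coe_toLinearMap, map_add, map_sub, map_smul]
    module
  · rintro y ⟨hy, hyK⟩
    obtain ⟨f, a, c, rfl⟩ := (hmemdom y).1 hy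
    obtain ⟨rfl, rfl⟩ := hinK f a c hyK
    simp [hΦ]
  · exact fun y hy => ⟨hle.1 hy, hdK hy⟩
  · rw [Submodule.eq_bot_iff]
    rintro y ⟨hy, hyL⟩
    obtain ⟨f, a, c, rfl⟩ := (hmemdom y).1 hy
    have hL : (Φ (f, a, c)).1 ∈ Kᗮ := hyL
    have hk0 : (f : 𝔖) + J₁ (a + Complex.I • matX c) - J₂ (a - Complex.I • matX c) = 0 := by
      rw [hΦ] at hL
      have h1 := (Submodule.add_mem_iff_left Kᗮ (Kᗮ.smul_mem _ (hm₃ _))).1 hL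
      exact inner_self_eq_zero.1 ((Submodule.mem_orthogonal _ _).1 h1 _ (hKpart f _ _))
    obtain ⟨hn0, hm0⟩ := eq_zero_of_add_deficiency K S hsym hdomK hranK f (hm₁ _) (hm₂ _) hk0
    rw [map_eq_zero_iff _ J₁.injective] at hn0
    rw [map_eq_zero_iff _ J₂.injective] at hm0
    have ha : a = 0 := by
      linear_combination (norm := module) (1 / 2 : ℂ) • hn0 + (1 / 2 : ℂ) • hm0
    -- The remaining equation `X c = 0` is the case `ε 0` of the trivial intersection of ranges.
    have hX : matX c = 0 := by
      rw [ha, zero_add, smul_eq_zero_iff_right Complex.I_ne_zero] at hn0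
      exact hn0
    have hc : c = 0 := (matX_add_diagE (a := c) (c := 0) (by rw [hX, map_zero, add_zero])).1
    subst ha hc
    rw [hΦ, hk0]
    simp
end

section
/- Let 𝔖 be an infinite-dimensional separable complex Hilbert space and let K be a closed subspace of 𝔖 whose orthogonal complement K^⊥ is infinite-dimensional. Let S be a closed symmetric operator in 𝔖 with dom S ⊆ K, dom S dense in K, and ran S ⊆ K, and assume both deficiency subspaces N_i := K ∩ (ran(S + iI))^⊥ and N_{−i} := K ∩ (ran(S − iI))^⊥ are infinite-dimensional. Then there exists a densely defined maximal dissipative operator S̃ in 𝔖 extending S, with adjoint S̃*, such that dom S̃ ∩ K = dom S̃* ∩ K = dom S and dom S̃ ∩ K^⊥ = dom S̃* ∩ K^⊥ = {0}. -/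
set_option synthInstance.maxHeartbeats 1000000

open scoped ComplexInnerProductSpace

/-- A dissipative operator: `Im (Tf, f) ≥ 0` for all `f ∈ dom T`, where `(·,·)` is the classical
inner product (linear in the first argument), i.e. `⟪f, Tf⟫` in Mathlib's convention. -/
def LinearPMap.IsDissipative {E : Type*} [NormedAddCommGroup E] [InnerProductSpace ℂ E]
    (T : E →ₗ.[ℂ] E) : Prop :=
  ∀ x : T.domain, 0 ≤ (⟪(x : E), T x⟫).im

/-- A maximal dissipative operator: dissipative with no proper dissipative extension. -/
def LinearPMap.IsMaximalDissipative {E : Type*} [NormedAddCommGroup E] [InnerProductSpace ℂ E]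
    (T : E →ₗ.[ℂ] E) : Prop :=
  T.IsDissipative ∧ ∀ T' : E →ₗ.[ℂ] E, T'.IsDissipative → T ≤ T' → T' = T

/-!
The extension is the inverse Cayley transform `i (1 + V) (1 - V)⁻¹` of a contraction `V` on the
whole space. Such an operator is maximal dissipative (`invCayley_isMaximalDissipative`), its domain
is `range (1 - V)` and the domain of its adjoint is `range (1 - V†)`
(`mem_adjoint_invCayley_domain`). It extends `S` if `V` extends the Cayley transform
`S f + i f ↦ S f - i f` of `S`.

Let `M = range (S + i)`, a closed subspace of `K`, and `L = Kᗮ`, so that the space is the orthogonal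
sum of `M`, `N_i` and `L`. The Cayley transform of `S`, a unitary `N_i → N_{-i}` (both are separable
and infinite-dimensional) and the identity of `L` glue to a unitary `J` (`exists_cayley_extension`).
Take `V = J (1 - X)` with `0 ≤ X ≤ 1` vanishing on `M`. Because `J x - x ∈ K` for all `x`, and by
the independence of `dom S`, `N_i`, `N_{-i}` (`eq_zero_of_deficiency_sum`), the four domain
conditions, for `V` with `S` and for `V†` with `-S`, reduce (`range_sub_inf`) to the same two
properties of `X`:
* if `v ⟂ M` and `X v ∈ K`, then `v = 0`;
* if `l ∈ L` and `X l ∈ L`, then `l = 0`.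

To obtain them, put `X = Y† Y`, where `Y = c (Q + G)`, with `Q : N_i → L` and `G : L → L` having
in orthonormal bases `p` of `N_i` and `q` of `L` the matrices `2 ^ (-(j + 1) (k + 1))` and
`diag (2 ^ (-(k + 1) ^ 2))`. The coordinates of a nonzero vector in the range of `Q` decay exactly
geometrically, those of a vector in the range of `G` faster than any
geometric sequence, so these ranges meet only in `0` and `Y` is injective on `N_i ⊕ L`
(`eq_zero_of_tsum_add_eq_zero`). As `Q`, `Q†` and `G` are injective too, both properties follow
(`exists_coupling`).
-/

namespace SecondKind

/-! ### Two dense operator ranges with trivial intersection -/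

/-- With `t = 2 ^ (-(k + 1))` the hypothesis reads `∑ j, x j * t ^ (j + 1) = -t ^ (k + 1) * y k`.
If `x n` is the first nonzero term, the left side is of exact order `t ^ (n + 1)` as `k → ∞`, while
the right side is `O (t ^ (n + 2))`. -/
lemma eq_zero_of_tsum_add_eq_zero {x y : ℕ → ℂ} {B : ℝ} (hx : ∀ j, ‖x j‖ ≤ B)
    (hy : ∀ k, ‖y k‖ ≤ B)
    (h : ∀ k : ℕ, ∑' j : ℕ, (2⁻¹ : ℂ) ^ ((j + 1) * (k + 1)) * x j
      + (2⁻¹ : ℂ) ^ ((k + 1) * (k + 1)) * y k = 0) : ∀ j, x j = 0 := by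
  have hB : 0 ≤ B := (norm_nonneg _).trans (hx 0)
  intro n
  induction n using Nat.strong_induction_on with
  | _ n ih =>
    have key : ∀ k : ℕ, n + 1 ≤ k → ‖x n‖ ≤ 3 * B * (2⁻¹ : ℝ) ^ k := by
      intro k hk
      set t : ℂ := (2⁻¹ : ℂ) ^ (k + 1) with ht
      set r : ℝ := (2⁻¹ : ℝ) ^ (k + 1) with hr
      have hr0 : 0 < r := by positivity
      have htr : ‖t‖ = r := by simp [ht, hr]
      have hr2 : r ≤ 1 / 2 := by
        rw [hr, pow_succ]
        have : (2⁻¹ : ℝ) ^ k ≤ 1 := pow_le_one₀ (by norm_num) (by norm_num)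
        linarith
      have hk' := h k
      simp only [mul_comm _ (k + 1), pow_mul] at hk'
      rw [← ht] at hk'
      have hbd : ∀ j, ‖t ^ (j + 1) * x j‖ ≤ B * r * r ^ j := by
        intro j
        rw [norm_mul, norm_pow, htr, pow_succ]
        have := mul_le_mul_of_nonneg_left (hx j) (by positivity : 0 ≤ r ^ j * r)
        linarith
      have hgeo : Summable fun j : ℕ => r ^ j :=
        summable_geometric_of_lt_one hr0.le (by linarith)
      have hsum : Summable fun j => t ^ (j + 1) * x j :=
        Summable.of_norm_bounded (hgeo.mul_left (B * r)) hbd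
      rw [← hsum.sum_add_tsum_nat_add (n + 1), Finset.sum_range_succ,
        Finset.sum_eq_zero (fun i hi => by rw [ih i (Finset.mem_range.1 hi), mul_zero]),
        zero_add] at hk'
      have htail : ‖∑' j, t ^ (j + (n + 1) + 1) * x (j + (n + 1))‖ ≤ 2 * B * r ^ (n + 2) := by
        have hs : HasSum (fun j : ℕ => B * r ^ (n + 2) * r ^ j) (B * r ^ (n + 2) * (1 - r)⁻¹) :=
          (hasSum_geometric_of_lt_one hr0.le (by linarith)).mul_left _
        refine (tsum_of_norm_bounded hs fun j => ?_).trans ?_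
        · refine (hbd _).trans_eq ?_
          ring
        · have h2 : (1 - r)⁻¹ ≤ 2 := by
            rw [inv_le_comm₀ (by linarith) (by norm_num)]; linarith
          have := mul_le_mul_of_nonneg_left h2 (by positivity : 0 ≤ B * r ^ (n + 2))
          linarith
      have hlast : ‖t ^ (k + 1) * y k‖ ≤ B * r ^ (n + 2) := by
        rw [norm_mul, norm_pow, htr, mul_comm]
        have : r ^ (k + 1) ≤ r ^ (n + 2) :=
          pow_le_pow_of_le_one hr0.le (by linarith) (by omega)
        exact mul_le_mul (hy k) this (by positivity) hB
      have hmain : ‖t ^ (n + 1) * x n‖ ≤ 3 * B * r ^ (n + 2) := by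
        have e : t ^ (n + 1) * x n = -(∑' j, t ^ (j + (n + 1) + 1) * x (j + (n + 1))
            + t ^ (k + 1) * y k) := by linear_combination hk'
        rw [e, norm_neg]
        refine (norm_add_le _ _).trans ?_
        linarith
      rw [norm_mul, norm_pow, htr] at hmain
      have h3 : ‖x n‖ ≤ 3 * B * r := by
        refine le_of_mul_le_mul_left ?_ (by positivity : 0 < r ^ (n + 1))
        refine hmain.trans_eq ?_
        ring
      refine h3.trans (mul_le_mul_of_nonneg_left ?_ (by positivity))
      exact pow_le_pow_of_le_one (by norm_num) (by norm_num) (by omega)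
    have hlim : Filter.Tendsto (fun k : ℕ => 3 * B * (2⁻¹ : ℝ) ^ k) Filter.atTop (nhds 0) := by
      simpa using (tendsto_pow_atTop_nhds_zero_of_lt_one (r := (2⁻¹ : ℝ))
        (by norm_num) (by norm_num)).const_mul (3 * B)
    have := ge_of_tendsto hlim (Filter.eventually_atTop.2 ⟨n + 1, key⟩)
    exact norm_le_zero_iff.1 this

variable {E : Type*} [NormedAddCommGroup E] [InnerProductSpace ℂ E]

/-! ### Hilbert bases and the coupling operator -/

lemma exists_hilbertBasis_nat [CompleteSpace E] [TopologicalSpace.SeparableSpace E]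
    (h : ¬ FiniteDimensional ℂ E) : Nonempty (HilbertBasis ℕ ℂ E) := by
  obtain ⟨w, b, hb⟩ := exists_hilbertBasis ℂ E
  have hwc : Countable w := by
    have hd : Pairwise (Function.onFun Disjoint fun i : w => Metric.ball (b i) (1 / 2)) := by
      intro i j hij
      refine Metric.ball_disjoint_ball ?_
      have h2 : ‖b i - b j‖ ^ 2 = 2 := by
        rw [@norm_sub_sq ℂ, b.orthonormal.2 hij, b.orthonormal.1 i, b.orthonormal.1 j]
        norm_num
      rw [dist_eq_norm]
      nlinarith [norm_nonneg (b i - b j)]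
    exact hd.countable_of_isOpen_disjoint (fun _ => Metric.isOpen_ball)
      (fun i => ⟨b i, Metric.mem_ball_self (by norm_num)⟩)
  have hwi : Infinite w := by
    by_contra hfin
    rw [not_infinite_iff_finite] at hfin
    have := Fintype.ofFinite w
    exact h b.toOrthonormalBasis.toBasis.finiteDimensional_of_finite
  obtain ⟨e⟩ := nonempty_equiv_of_countable (α := ℕ) (β := w)
  refine ⟨HilbertBasis.mk (v := b ∘ e) (b.orthonormal.comp e e.injective) ?_⟩
  rw [e.surjective.range_comp, b.dense_span]

lemma conj_inv_two_pow (n : ℕ) : starRingEnd ℂ ((2⁻¹ : ℂ) ^ n) = 2⁻¹ ^ n := by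
  rw [map_pow, map_inv₀, map_ofNat]

lemma inner_eq_tsum_of_hasSum {e : ℕ → ℕ} {f : ℕ → E} {z : E}
    (h : HasSum (fun j => (2⁻¹ : ℂ) ^ e j • f j) z) (w : E) :
    ⟪z, w⟫ = ∑' j, (2⁻¹ : ℂ) ^ e j * ⟪f j, w⟫ := by
  have h1 := (innerSLFlip ℂ w).hasSum h
  simp only [innerSLFlip_apply_apply, inner_smul_left, conj_inv_two_pow] at h1
  exact h1.tsum_eq.symm

/-- The operator `X = Y† Y`: `Y = c Z`, where `Z` has the coordinates
`⟪q k, Z x⟫ = ∑ j, 2 ^ (-(j + 1) (k + 1)) * ⟪p j, x⟫ + 2 ^ (-(k + 1) ^ 2) * ⟪q k, x⟫`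
and `c > 0` makes `‖Y‖ ≤ 1`. The last two clauses are the injectivity properties of `X`, with
`p` and `q` thought of as bases of a deficiency subspace and of `Kᗮ`. -/
lemma exists_coupling [CompleteSpace E] {p q : ℕ → E} (hp : Orthonormal ℂ p)
    (hq : Orthonormal ℂ q) (hpq : ∀ j k, ⟪p j, q k⟫ = 0) :
    ∃ X : E →L[ℂ] E, (∀ x y, ⟪X x, y⟫ = ⟪x, X y⟫) ∧ (∀ x, ‖x - X x‖ ≤ ‖x‖) ∧
      (∀ x, (∀ j, ⟪p j, x⟫ = 0) → (∀ k, ⟪q k, x⟫ = 0) → X x = 0) ∧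
      (∀ x, (∀ k, ⟪q k, X x⟫ = 0) → (∀ j, ⟪p j, x⟫ = 0) ∧ ∀ k, ⟪q k, x⟫ = 0) ∧
      (∀ x, (∀ j, ⟪p j, x⟫ = 0) → (∀ j, ⟪p j, X x⟫ = 0) → ∀ k, ⟪q k, x⟫ = 0) := by
  have hqp : ∀ k j, ⟪q k, p j⟫ = 0 := fun k j => inner_eq_zero_symm.1 (hpq j k)
  have hgeo : Summable fun j : ℕ => (2⁻¹ : ℝ) ^ j :=
    summable_geometric_of_lt_one (by norm_num) (by norm_num)
  have hcoef : ∀ j k : ℕ, ‖(2⁻¹ : ℂ) ^ ((j + 1) * (k + 1))‖ ≤ (2⁻¹ : ℝ) ^ k * (2⁻¹ : ℝ) ^ j := by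
    intro j k
    rw [norm_pow, norm_inv, RCLike.norm_ofNat, ← pow_add]
    exact pow_le_pow_of_le_one (by norm_num) (by norm_num) (by nlinarith)
  have hpn : ∀ k j : ℕ, ‖(2⁻¹ : ℂ) ^ ((j + 1) * (k + 1)) • p j‖
      ≤ (2⁻¹ : ℝ) ^ k * (2⁻¹ : ℝ) ^ j := by
    intro k j
    rw [norm_smul, hp.1 j, mul_one]
    exact hcoef j k
  have hsp : ∀ k : ℕ, Summable fun j : ℕ => (2⁻¹ : ℂ) ^ ((j + 1) * (k + 1)) • p j := fun k =>
    Summable.of_norm_bounded (hgeo.mul_left _) (hpn k)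
  set u : ℕ → E := fun k => ∑' j : ℕ, (2⁻¹ : ℂ) ^ ((j + 1) * (k + 1)) • p j with hu
  set v : ℕ → E := fun k => u k + (2⁻¹ : ℂ) ^ ((k + 1) * (k + 1)) • q k with hv
  have hun : ∀ k, ‖u k‖ ≤ (2⁻¹ : ℝ) ^ k * 2 := fun k =>
    tsum_of_norm_bounded (by simpa using hasSum_geometric_two.mul_left ((2⁻¹ : ℝ) ^ k)) (hpn k)
  have hvn : ∀ k, ‖v k‖ ≤ 3 * (2⁻¹ : ℝ) ^ k := by
    intro k
    refine (norm_add_le _ _).trans ?_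
    have h1 : ‖(2⁻¹ : ℂ) ^ ((k + 1) * (k + 1)) • q k‖ ≤ (2⁻¹ : ℝ) ^ k := by
      rw [norm_smul, hq.1 k, mul_one]
      refine (hcoef k k).trans (mul_le_of_le_one_right (by positivity) ?_)
      exact pow_le_one₀ (by norm_num) (by norm_num)
    linarith [hun k]
  have hu_inner : ∀ k x, ⟪u k, x⟫ = ∑' j : ℕ, (2⁻¹ : ℂ) ^ ((j + 1) * (k + 1)) * ⟪p j, x⟫ := by
    intro k x
    exact inner_eq_tsum_of_hasSum (hsp k).hasSum x
  have hYs : Summable fun k => InnerProductSpace.rankOne ℂ (q k) (v k) := by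
    refine Summable.of_norm_bounded (hgeo.mul_left 3) fun k => ?_
    rw [InnerProductSpace.norm_rankOne, hq.1 k, one_mul]
    exact hvn k
  set Z : E →L[ℂ] E := ∑' k, InnerProductSpace.rankOne ℂ (q k) (v k) with hZ
  have hZx : ∀ x, HasSum (fun k => ⟪v k, x⟫ • q k) (Z x) := by
    intro x
    simpa using hYs.hasSum.mapL (ContinuousLinearMap.apply ℂ E x)
  have hqZ : ∀ k x, ⟪q k, Z x⟫ = ⟪v k, x⟫ := by
    intro k x
    have h1 := (hZx x).mapL (innerSL ℂ (q k))
    have h2 : HasSum (fun i => innerSL ℂ (q k) (⟪v i, x⟫ • q i)) ⟪v k, x⟫ := by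
      convert hasSum_ite_eq k ⟪v k, x⟫ using 2 with i
      rcases eq_or_ne i k with rfl | hik
      · simp [hq.1 i]
      · simp [hq.2 hik.symm, hik]
    exact h1.unique h2
  have hZzero : ∀ x, (∀ k, ⟪v k, x⟫ = 0) → Z x = 0 := by
    intro x hx
    refine (hZx x).unique ?_
    simp [hx, hasSum_zero]
  have hvx : ∀ k x, ⟪v k, x⟫ = ∑' j : ℕ, (2⁻¹ : ℂ) ^ ((j + 1) * (k + 1)) * ⟪p j, x⟫
      + (2⁻¹ : ℂ) ^ ((k + 1) * (k + 1)) * ⟪q k, x⟫ := by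
    intro k x
    rw [hv, inner_add_left, hu_inner, inner_smul_left, conj_inv_two_pow]
  have hne : ∀ n : ℕ, (2⁻¹ : ℂ) ^ n ≠ 0 := fun n => pow_ne_zero _ (by norm_num)
  have hZinj : ∀ x, (∀ k, ⟪v k, x⟫ = 0) → (∀ j, ⟪p j, x⟫ = 0) ∧ ∀ k, ⟪q k, x⟫ = 0 := by
    intro x hx
    have hb : ∀ {f : ℕ → E}, Orthonormal ℂ f → ∀ j, ‖⟪f j, x⟫‖ ≤ ‖x‖ := by
      intro f hf j
      simpa [hf.1 j] using norm_inner_le_norm (𝕜 := ℂ) (f j) x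
    have h0 : ∀ j, ⟪p j, x⟫ = 0 := eq_zero_of_tsum_add_eq_zero (B := ‖x‖) (hb hp) (hb hq)
      (fun k => by rw [← hvx, hx])
    refine ⟨h0, fun k => ?_⟩
    have := hvx k x
    simp only [hx, h0, mul_zero, tsum_zero, zero_add] at this
    exact (mul_eq_zero.1 this.symm).resolve_left (hne _)
  have hZq : ∀ k, Z (q k) = (2⁻¹ : ℂ) ^ ((k + 1) * (k + 1)) • q k := by
    intro k
    refine (hZx (q k)).unique ?_
    convert hasSum_ite_eq k ((2⁻¹ : ℂ) ^ ((k + 1) * (k + 1)) • q k) using 2 with i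
    rw [hvx]
    rcases eq_or_ne i k with rfl | hik
    · simp [hpq, hq.1 i]
    · simp [hpq, hq.2 hik, hik]
  have hZp : ∀ j, HasSum (fun k : ℕ => (2⁻¹ : ℂ) ^ ((j + 1) * (k + 1)) • q k) (Z (p j)) := by
    intro j
    convert hZx (p j) using 3 with k
    rw [hvx, hqp, tsum_eq_single j]
    · simp [hp.1 j]
    · intro i hij
      simp [hp.2 hij]
  set c : ℝ := (‖Z‖ + 1)⁻¹ with hc
  have hc0 : 0 < c := by positivity
  set Y : E →L[ℂ] E := (c : ℂ) • Z with hY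
  have hYn : ‖Y‖ ≤ 1 := by
    rw [hY, norm_smul, Complex.norm_real, Real.norm_of_nonneg hc0.le, hc,
      inv_mul_le_iff₀ (by positivity)]
    linarith
  have hcc : (c : ℂ) ≠ 0 := by exact_mod_cast hc0.ne'
  set Ya := ContinuousLinearMap.adjoint Y with hYa
  have hYan : ‖Ya‖ ≤ 1 := by rw [hYa, LinearIsometryEquiv.norm_map]; exact hYn
  have hXr : ∀ x y, ⟪x, Ya (Y y)⟫ = ⟪Y x, Y y⟫ := fun x y =>
    ContinuousLinearMap.adjoint_inner_right _ _ _
  refine ⟨Ya ∘L Y, fun x y => ?_, fun x => ?_, fun x h1 h2 => ?_, fun x h => ?_, fun x h1 h2 => ?_⟩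
  · simp only [ContinuousLinearMap.comp_apply]
    rw [hXr, ContinuousLinearMap.adjoint_inner_left]
  · simp only [ContinuousLinearMap.comp_apply]
    have h1 : ‖Ya (Y x)‖ ≤ ‖Y x‖ := by
      simpa using Ya.le_of_opNorm_le hYan (Y x)
    have h2 : ‖x - Ya (Y x)‖ ^ 2 = ‖x‖ ^ 2 - 2 * ‖Y x‖ ^ 2 + ‖Ya (Y x)‖ ^ 2 := by
      rw [@norm_sub_sq ℂ, hXr, inner_self_eq_norm_sq]
    have h3 : ‖x - Ya (Y x)‖ ^ 2 ≤ ‖x‖ ^ 2 := by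
      nlinarith [norm_nonneg (Ya (Y x)), norm_nonneg (Y x)]
    exact le_of_sq_le_sq h3 (norm_nonneg _)
  · have : Z x = 0 := hZzero x fun k => by rw [hvx]; simp [h1, h2]
    simp [hY, this]
  · apply hZinj
    intro k
    have h1 := h k
    simp only [ContinuousLinearMap.comp_apply] at h1
    rw [hXr, hY] at h1
    simp only [smul_apply, hZq, inner_smul_left, inner_smul_right, hqZ] at h1
    simpa [hcc] using h1
  · have hvq : ∀ k, ⟪v k, x⟫ = (2⁻¹ : ℂ) ^ ((k + 1) * (k + 1)) * ⟪q k, x⟫ := by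
      intro k; rw [hvx]; simp [h1]
    -- injectivity of the matrix `2 ^ (-(j + 1) (k + 1))`, applied to the coordinates of `Z x`
    have h0 : ∀ k, ⟪v k, x⟫ = 0 := by
      refine eq_zero_of_tsum_add_eq_zero (B := ‖Z x‖) (y := 0) (fun k => ?_) (by simp) fun j => ?_
      · rw [← hqZ]
        simpa [hq.1 k] using norm_inner_le_norm (𝕜 := ℂ) (q k) (Z x)
      · have h3 := h2 j
        simp only [ContinuousLinearMap.comp_apply] at h3
        rw [hXr, hY] at h3
        simp only [smul_apply, inner_smul_left, inner_smul_right] at h3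
        have h4 : ⟪Z (p j), Z x⟫ = 0 := by simpa [hcc] using h3
        rw [inner_eq_tsum_of_hasSum (hZp j)] at h4
        simpa [hqZ, mul_comm] using h4
    intro k
    have := h0 k
    rw [hvq] at this
    exact (mul_eq_zero.1 this).resolve_left (hne _)


/-! ### Deficiency subspaces and the Cayley transform of a symmetric operator -/

section symmetric

variable {D K : Submodule ℂ E} {A : D →ₗ[ℂ] E}

lemma norm_sq_apply_add_smul (hsym : ∀ x y : D, ⟪A x, (y : E)⟫ = ⟪(x : E), A y⟫) {c : ℂ}
    (hc : c = Complex.I ∨ c = -Complex.I) (f : D) :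
    ‖A f + c • (f : E)‖ ^ 2 = ‖A f‖ ^ 2 + ‖(f : E)‖ ^ 2 := by
  have him : (⟪A f, (f : E)⟫).im = 0 := by
    have h1 := hsym f f
    rw [← inner_conj_symm (f : E) (A f)] at h1
    exact Complex.conj_eq_iff_im.1 h1.symm
  rw [@norm_add_sq ℂ, inner_smul_right, norm_smul]
  rcases hc with rfl | rfl <;> simp [him]

/-- The map `(f, S f) ↦ S f + c f` on the complete space `S.graph` is bounded below. -/
lemma isClosed_range_add_smul [CompleteSpace E] {S : E →ₗ.[ℂ] E} (hclosed : S.IsClosed)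
    (hsym : ∀ x y : S.domain, ⟪S x, (y : E)⟫ = ⟪(x : E), S y⟫) {c : ℂ}
    (hc : c = Complex.I ∨ c = -Complex.I) :
    IsClosed (LinearMap.range (S.toFun + c • S.domain.subtype) : Set E) := by
  have : CompleteSpace S.graph := IsClosed.completeSpace_coe (hs := hclosed)
  let F : S.graph →L[ℂ] E :=
    (ContinuousLinearMap.snd ℂ E E + c • ContinuousLinearMap.fst ℂ E E) ∘L S.graph.subtypeL
  have hF : ∀ z : S.graph, F z = (z : E × E).2 + c • (z : E × E).1 := fun z => rfl
  have hanti : AntilipschitzWith 1 F := by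
    refine AddMonoidHomClass.antilipschitz_of_bound F fun z => ?_
    obtain ⟨⟨a, b⟩, hz⟩ := z
    obtain ⟨f, rfl, rfl⟩ := (LinearPMap.mem_graph_iff S).1 hz
    have h1 := norm_sq_apply_add_smul (A := S.toFun) hsym hc f
    rw [hF, NNReal.coe_one, one_mul, Submodule.coe_norm, Prod.norm_mk]
    refine max_le ?_ ?_ <;> refine le_of_sq_le_sq ?_ (norm_nonneg _)
    · exact (le_add_of_nonneg_left (sq_nonneg _)).trans_eq h1.symm
    · exact (le_add_of_nonneg_right (sq_nonneg _)).trans_eq h1.symm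
  convert hanti.isClosed_range F.uniformContinuous using 1
  ext y
  constructor
  · rintro ⟨f, rfl⟩
    exact ⟨⟨((f : E), S f), S.mem_graph f⟩, rfl⟩
  · rintro ⟨⟨⟨a, b⟩, hz⟩, rfl⟩
    obtain ⟨f, rfl, rfl⟩ := (LinearPMap.mem_graph_iff S).1 hz
    exact ⟨f, rfl⟩

/-- Linear independence of the domain and the two deficiency subspaces (part of von Neumann's
formula): `n` and `m` are eigenvectors of the adjoint in `K`, with eigenvalues `i` and `-i`, so
applying the adjoint to the relation `2 i f + n - m = 0` gives `2 A f + n + m = 0`; together these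
put `n` in `range (A + i)`, to which it is orthogonal. -/
lemma eq_zero_of_deficiency_sum (hsym : ∀ x y : D, ⟪A x, (y : E)⟫ = ⟪(x : E), A y⟫)
    (hDK : D.topologicalClosure = K) (hAK : ∀ x, A x ∈ K) {f : D} {n m : E}
    (hn : n ∈ K) (hm : m ∈ K) (hn' : ∀ g : D, ⟪A g + Complex.I • (g : E), n⟫ = 0)
    (hm' : ∀ g : D, ⟪A g - Complex.I • (g : E), m⟫ = 0)
    (h : (2 * Complex.I) • (f : E) + n - m = 0) : f = 0 ∧ n = 0 := by
  have hDle : D ≤ K := hDK ▸ D.le_topologicalClosure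
  have hkey : (2 : ℂ) • A f + n + m = 0 := by
    set z := (2 : ℂ) • A f + n + m with hz
    have hzK : z ∈ K := K.add_mem (K.add_mem (K.smul_mem _ (hAK f)) hn) hm
    have horth : ∀ g : D, ⟪(g : E), z⟫ = 0 := by
      intro g
      have h1 := hn' g
      have h2 := hm' g
      have h3 : ⟪A g, (2 * Complex.I) • (f : E) + n - m⟫ = 0 := by rw [h, inner_zero_right]
      rw [inner_add_left, inner_smul_left, Complex.conj_I] at h1
      rw [inner_sub_left, inner_smul_left, Complex.conj_I] at h2
      rw [inner_sub_right, inner_add_right, inner_smul_right, hsym] at h3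
      rw [hz, inner_add_right, inner_add_right, inner_smul_right]
      have hI := Complex.I_mul_I
      linear_combination (-Complex.I) * h3 + Complex.I * h1 - Complex.I * h2
        + (2 * ⟪(g : E), A f⟫ + ⟪(g : E), n⟫ + ⟪(g : E), m⟫) * hI
    have hzD : z ∈ Dᗮ := fun g hg => horth ⟨g, hg⟩
    rw [← Submodule.orthogonal_closure, hDK] at hzD
    exact inner_self_eq_zero.1 (hzD z hzK)
  have hM : A f + Complex.I • (f : E) = -n := by
    have e : (2 : ℂ) • (A f + Complex.I • (f : E) + n) = 0 := by
      have e' : (2 : ℂ) • (A f + Complex.I • (f : E) + n)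
          = ((2 : ℂ) • A f + n + m) + ((2 * Complex.I) • (f : E) + n - m) := by module
      rw [e', hkey, h, add_zero]
    have := (smul_eq_zero.1 e).resolve_left (by norm_num)
    exact eq_neg_of_add_eq_zero_left this
  have hn0 : n = 0 := by
    have := hn' f
    rw [hM, inner_neg_left, neg_eq_zero] at this
    exact inner_self_eq_zero.1 this
  refine ⟨?_, hn0⟩
  have h1 := norm_sq_apply_add_smul hsym (Or.inl rfl) f
  rw [hM, hn0, neg_zero, norm_zero] at h1
  have h2 : ‖(f : E)‖ = 0 := by nlinarith [norm_nonneg (f : E), sq_nonneg ‖A f‖]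
  exact Subtype.ext (norm_eq_zero.1 h2)

/-- How `range (1 - V)` meets `K` and `Kᗮ`, for an extension `V` of the Cayley transform of a
symmetric operator `A` in `K` that maps `(range (A + i))ᗮ` into `(range (A - i))ᗮ`. Splitting off
the part of `y` in `range (A + i)`, on which `1 - V` takes values in the domain `D`, reduces the
first claim to `h1` and, by `eq_zero_of_deficiency_sum`, the second to `h2`. -/
lemma range_sub_inf [CompleteSpace K] (hsym : ∀ x y : D, ⟪A x, (y : E)⟫ = ⟪(x : E), A y⟫)
    (hDK : D.topologicalClosure = K) (hAK : ∀ x, A x ∈ K) {V : E → E}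
    (hVadd : ∀ x y, V (x + y) = V x + V y)
    (hV : ∀ f : D, V (A f + Complex.I • (f : E)) = A f - Complex.I • (f : E))
    (hdec : ∀ y, ∃ (f : D) (v : E), y = A f + Complex.I • (f : E) + v ∧
      ∀ g : D, ⟪A g + Complex.I • (g : E), v⟫ = 0)
    (hVperp : ∀ v, (∀ g : D, ⟪A g + Complex.I • (g : E), v⟫ = 0) →
      ∀ g : D, ⟪A g - Complex.I • (g : E), V v⟫ = 0)
    (h1 : ∀ v, (∀ g : D, ⟪A g + Complex.I • (g : E), v⟫ = 0) → v - V v ∈ K → v = 0)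
    (h2 : ∀ l ∈ Kᗮ, V l ∈ Kᗮ → l = 0) :
    (∀ y, y - V y ∈ K → y - V y ∈ D) ∧ (∀ y, y - V y ∈ Kᗮ → y = 0) := by
  have hDle : D ≤ K := hDK ▸ D.le_topologicalClosure
  have hdiff : ∀ (f : D) (v : E), A f + Complex.I • (f : E) + v - V (A f + Complex.I • (f : E) + v)
      = (2 * Complex.I) • (f : E) + (v - V v) := by
    intro f v
    rw [hVadd, hV]
    module
  constructor
  · intro y hy
    obtain ⟨f, v, rfl, hv⟩ := hdec y
    rw [hdiff] at hy ⊢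
    have hfK : (2 * Complex.I) • (f : E) ∈ K := K.smul_mem _ (hDle f.2)
    have hv0 := h1 v hv ((K.add_mem_iff_right hfK).1 hy)
    have hV0 : V 0 = 0 := by simpa using hVadd 0 0
    rw [hv0, hV0, sub_zero, add_zero]
    exact D.smul_mem _ f.2
  · intro y hy
    obtain ⟨f, v, rfl, hv⟩ := hdec y
    rw [hdiff] at hy
    obtain ⟨n, hn, l, hl, rfl⟩ := K.exists_add_mem_mem_orthogonal v
    obtain ⟨m, hm, l', hl', hVv⟩ := K.exists_add_mem_mem_orthogonal (V (n + l))
    have hpm : ∀ (g : D) (c : ℂ), A g + c • (g : E) ∈ K := fun g c =>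
      K.add_mem (hAK g) (K.smul_mem _ (hDle g.2))
    have hn' : ∀ g : D, ⟪A g + Complex.I • (g : E), n⟫ = 0 := by
      intro g
      have := hv g
      rwa [inner_add_right, hl _ (hpm g _), add_zero] at this
    have hm' : ∀ g : D, ⟪A g - Complex.I • (g : E), m⟫ = 0 := by
      intro g
      have := hVperp _ hv g
      have h3 := hpm g (-Complex.I)
      rw [neg_smul, ← sub_eq_add_neg] at h3
      rwa [hVv, inner_add_right, hl' _ h3, add_zero] at this
    have hz : (2 * Complex.I) • (f : E) + n - m = 0 := by
      set z := (2 * Complex.I) • (f : E) + n - m with hz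
      have hzK : z ∈ K := K.sub_mem (K.add_mem (K.smul_mem _ (hDle f.2)) hn) hm
      have e : (2 * Complex.I) • (f : E) + (n + l - V (n + l)) = z + (l - l') := by
        rw [hVv, hz]; module
      rw [e] at hy
      have hzL : z ∈ Kᗮ := (Kᗮ.add_mem_iff_left (Kᗮ.sub_mem hl hl')).1 hy
      exact inner_self_eq_zero.1 (hzL z hzK)
    obtain ⟨hf0, hn0⟩ := eq_zero_of_deficiency_sum hsym hDK hAK hn hm hn' hm' hz
    subst hf0 hn0
    have hm0 : m = 0 := by simpa using hz
    rw [zero_add] at hVv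
    rw [hm0, zero_add] at hVv
    have hl0 := h2 l hl (hVv ▸ hl')
    simp [hl0]

end symmetric

/-- The Cayley transform of `S`, a unitary `ψ` between the deficiency subspaces and the identity of
`Kᗮ` glue to a unitary of the whole space. -/
lemma exists_cayley_extension [CompleteSpace E] {K : Submodule ℂ E} [CompleteSpace K]
    {S : E →ₗ.[ℂ] E} (hsym : ∀ x y : S.domain, ⟪S x, (y : E)⟫ = ⟪(x : E), S y⟫)
    (hclosed : S.IsClosed) (hDle : S.domain ≤ K) (hranK : ∀ x : S.domain, S x ∈ K)
    (ψ : ↥(K ⊓ (LinearMap.range (S.toFun + Complex.I • S.domain.subtype))ᗮ) ≃ₗᵢ[ℂ]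
      ↥(K ⊓ (LinearMap.range (S.toFun - Complex.I • S.domain.subtype))ᗮ)) :
    ∃ J : E ≃ₗᵢ[ℂ] E, (∀ f : S.domain,
      J (S f + Complex.I • (f : E)) = S f - Complex.I • (f : E)) ∧ ∀ l ∈ Kᗮ, J l = l := by
  set B := S.toFun + Complex.I • S.domain.subtype with hB
  set B' := S.toFun - Complex.I • S.domain.subtype with hB'
  have hBe : B' = S.toFun + (-Complex.I) • S.domain.subtype := by rw [hB']; module
  have hBf : ∀ f, B f = S f + Complex.I • (f : E) := fun f => rfl
  have hB'f : ∀ f, B' f = S f - Complex.I • (f : E) := fun f => rfl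
  have hMc : IsClosed (LinearMap.range B : Set E) :=
    isClosed_range_add_smul hclosed hsym (Or.inl rfl)
  have hM'c : IsClosed (LinearMap.range B' : Set E) := by
    rw [hBe]; exact isClosed_range_add_smul hclosed hsym (Or.inr rfl)
  have hn1 : ∀ f, ‖B f‖ ^ 2 = ‖S f‖ ^ 2 + ‖(f : E)‖ ^ 2 := fun f =>
    norm_sq_apply_add_smul (A := S.toFun) hsym (Or.inl rfl) f
  have hn2 : ∀ f, ‖B' f‖ ^ 2 = ‖S f‖ ^ 2 + ‖(f : E)‖ ^ 2 := fun f => by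
    rw [hBe]; exact norm_sq_apply_add_smul (A := S.toFun) hsym (Or.inr rfl) f
  have hMK : LinearMap.range B ≤ K := by
    rintro _ ⟨f, rfl⟩
    exact K.add_mem (hranK f) (K.smul_mem _ (hDle f.2))
  have hM'K : LinearMap.range B' ≤ K := by
    rintro _ ⟨f, rfl⟩
    exact K.sub_mem (hranK f) (K.smul_mem _ (hDle f.2))
  have hinj : Function.Injective B := by
    refine (injective_iff_map_eq_zero B).2 fun f hf => ?_
    have := hn1 f
    rw [hf, norm_zero] at this
    have h2 : ‖(f : E)‖ = 0 := by nlinarith [norm_nonneg (f : E), sq_nonneg ‖S f‖]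
    exact Subtype.ext (norm_eq_zero.1 h2)
  set M := LinearMap.range B with hM
  set M' := LinearMap.range B' with hM'
  have : CompleteSpace M := hMc.completeSpace_coe
  have : CompleteSpace M' := hM'c.completeSpace_coe
  have hKc : IsClosed (K : Set E) := (completeSpace_coe_iff_isComplete.1 ‹_›).isClosed
  have hNc : CompleteSpace ↥(K ⊓ Mᗮ) :=
    (hKc.inter M.isClosed_orthogonal).completeSpace_coe
  -- every vector splits along `M`, its complement in `K`, and `Kᗮ`
  have hsplit : ∀ (P : Submodule ℂ E) [CompleteSpace P], P ≤ K → ∀ x, ∃ m ∈ P,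
      ∃ n ∈ K ⊓ Pᗮ, ∃ l ∈ Kᗮ, x = m + n + l := by
    intro P _ hPK x
    obtain ⟨k, hk, l, hl, rfl⟩ := K.exists_add_mem_mem_orthogonal x
    obtain ⟨m, hm, n, hn, rfl⟩ := P.exists_add_mem_mem_orthogonal k
    exact ⟨m, hm, n, ⟨(K.add_mem_iff_right (hPK hm)).1 hk, hn⟩, l, hl, rfl⟩
  have hpyth : ∀ (P : Submodule ℂ E), P ≤ K → ∀ m ∈ P, ∀ n ∈ K ⊓ Pᗮ, ∀ l ∈ Kᗮ,
      ‖m + n + l‖ ^ 2 = ‖m‖ ^ 2 + ‖n‖ ^ 2 + ‖l‖ ^ 2 := by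
    intro P hPK m hm n hn l hl
    rw [@norm_add_sq ℂ, @norm_add_sq ℂ, hn.2 m hm, hl _ (K.add_mem (hPK hm) hn.1)]
    simp
  let e := LinearEquiv.ofInjective B hinj
  let C : M →ₗ[ℂ] E := B' ∘ₗ e.symm.toLinearMap
  have hC : ∀ f, C (e f) = B' f := fun f => by simp [C]
  have hCn : ∀ m : M, ‖C m‖ = ‖(m : E)‖ := by
    intro m
    obtain ⟨f, rfl⟩ := e.surjective m
    rw [hC]
    have : ‖B' f‖ ^ 2 = ‖B f‖ ^ 2 := by rw [hn1, hn2]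
    exact (sq_eq_sq₀ (norm_nonneg _) (norm_nonneg _)).1 this
  have hCM : ∀ m, C m ∈ M' := fun m => ⟨_, rfl⟩
  let J₀ : E →ₗ[ℂ] E := C ∘ₗ M.orthogonalProjectionOnto.toLinearMap
    + (Submodule.subtype _ ∘ₗ ψ.toLinearEquiv.toLinearMap) ∘ₗ
        (K ⊓ Mᗮ).orthogonalProjectionOnto.toLinearMap
    + Kᗮ.subtype ∘ₗ Kᗮ.orthogonalProjectionOnto.toLinearMap
  have hJ₀ : ∀ (m : M) (n : ↥(K ⊓ Mᗮ)), ∀ l ∈ Kᗮ, J₀ (m + n + l) = C m + ψ n + l := by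
    intro m n l hl
    have a1 : M.orthogonalProjectionOnto ((m : E) + n + l) = m := by
      rw [map_add, map_add, Submodule.orthogonalProjectionOnto_mem_subspace_eq_self,
        Submodule.orthogonalProjectionOnto_eq_zero_iff.2 n.2.2,
        Submodule.orthogonalProjectionOnto_eq_zero_iff.2 (Submodule.orthogonal_le hMK hl)]
      simp
    have a2 : (K ⊓ Mᗮ).orthogonalProjectionOnto ((m : E) + n + l) = n := by
      rw [map_add, map_add, Submodule.orthogonalProjectionOnto_mem_subspace_eq_self,
        Submodule.orthogonalProjectionOnto_eq_zero_iff.2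
          (fun u (hu : u ∈ K ⊓ Mᗮ) => inner_eq_zero_symm.1 (hu.2 m m.2)),
        Submodule.orthogonalProjectionOnto_eq_zero_iff.2
          (Submodule.orthogonal_le inf_le_left hl)]
      simp
    have a3 : Kᗮ.orthogonalProjectionOnto ((m : E) + n + l) = ⟨l, hl⟩ := by
      rw [map_add, Submodule.orthogonalProjectionOnto_eq_zero_iff.2
          (K.le_orthogonal_orthogonal (K.add_mem (hMK m.2) n.2.1)), zero_add]
      exact Submodule.orthogonalProjectionOnto_mem_subspace_eq_self (⟨l, hl⟩ : Kᗮ)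
    simp [J₀, a1, a2, a3]
  let J₁ : E →ₗᵢ[ℂ] E := ⟨J₀, fun x => by
    obtain ⟨m, hm, n, hn, l, hl, rfl⟩ := hsplit M hMK x
    have h1 := hpyth M hMK m hm n hn l hl
    have h2 := hpyth M' hM'K _ (hCM ⟨m, hm⟩) _ (ψ ⟨n, hn⟩).2 l hl
    have h3 := hJ₀ ⟨m, hm⟩ ⟨n, hn⟩ l hl
    have h4 : ‖((ψ ⟨n, hn⟩ : _) : E)‖ = ‖n‖ := ψ.norm_map ⟨n, hn⟩
    rw [hCn, h4, ← h3, ← h1] at h2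
    exact (sq_eq_sq₀ (norm_nonneg _) (norm_nonneg _)).1 h2⟩
  have hJ₁ : Function.Surjective J₁ := by
    intro y
    obtain ⟨m, hm, n, hn, l, hl, rfl⟩ := hsplit M' hM'K y
    obtain ⟨f, rfl⟩ := hm
    refine ⟨(e f : E) + ψ.symm ⟨n, hn⟩ + l, ?_⟩
    refine (hJ₀ (e f) (ψ.symm ⟨n, hn⟩) l hl).trans ?_
    rw [hC, ψ.apply_symm_apply]
  refine ⟨LinearIsometryEquiv.ofSurjective J₁ hJ₁, fun f => ?_, fun l hl => ?_⟩
  · have := hJ₀ (e f) 0 0 Kᗮ.zero_mem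
    simp only [hC, map_zero, ZeroMemClass.coe_zero, add_zero] at this
    exact this
  · have := hJ₀ 0 0 l hl
    simp only [map_zero, ZeroMemClass.coe_zero, add_zero, zero_add] at this
    exact this

/-! ### Inverse Cayley transform of a contraction -/

lemma eq_zero_of_forall_inner (b : HilbertBasis ℕ ℂ E) {x : E} (h : ∀ j, ⟪b j, x⟫ = 0) :
    x = 0 := by
  refine b.repr.injective ?_
  ext j
  rw [b.repr_apply_apply, h, map_zero]
  rfl

/-- The operator `i (1 + V) (1 - V)⁻¹` with domain `range (1 - V)`, the inverse Cayley transform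
of `V`. -/
noncomputable def invCayley (V : E →ₗ[ℂ] E)
    (h : Function.Injective (LinearMap.id - V : E →ₗ[ℂ] E)) : E →ₗ.[ℂ] E where
  domain := LinearMap.range (LinearMap.id - V : E →ₗ[ℂ] E)
  toFun := (Complex.I • (LinearMap.id + V : E →ₗ[ℂ] E)) ∘ₗ
    (LinearEquiv.ofInjective (LinearMap.id - V : E →ₗ[ℂ] E) h).symm.toLinearMap

section invCayley

variable {V : E →ₗ[ℂ] E} {h : Function.Injective (LinearMap.id - V : E →ₗ[ℂ] E)}

lemma mem_invCayley_domain {x : E} : x ∈ (invCayley V h).domain ↔ ∃ y, y - V y = x := Iff.rfl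

lemma invCayley_apply (y : E) (hy : y - V y ∈ (invCayley V h).domain) :
    invCayley V h ⟨y - V y, hy⟩ = Complex.I • (y + V y) := by
  have : (LinearEquiv.ofInjective (LinearMap.id - V : E →ₗ[ℂ] E) h).symm ⟨y - V y, hy⟩ = y := by
    rw [LinearEquiv.symm_apply_eq]
    rfl
  change Complex.I • ((LinearEquiv.ofInjective (LinearMap.id - V : E →ₗ[ℂ] E) h).symm
    ⟨y - V y, hy⟩ + V ((LinearEquiv.ofInjective (LinearMap.id - V : E →ₗ[ℂ] E) h).symm
    ⟨y - V y, hy⟩)) = _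
  rw [this]

lemma invCayley_isDissipative (hV : ∀ y, ‖V y‖ ≤ ‖y‖) : (invCayley V h).IsDissipative := by
  rintro ⟨x, hx⟩
  obtain ⟨y, rfl⟩ := mem_invCayley_domain.1 hx
  rw [invCayley_apply, inner_smul_right]
  have h1 : (⟪y - V y, y + V y⟫).re = ‖y‖ ^ 2 - ‖V y‖ ^ 2 := by
    have h2 : (⟪y, V y⟫).re = (⟪V y, y⟫).re := inner_re_symm (𝕜 := ℂ) y (V y)
    have h3 : (⟪y, y⟫).re = ‖y‖ ^ 2 := inner_self_eq_norm_sq (𝕜 := ℂ) y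
    have h4 : (⟪V y, V y⟫).re = ‖V y‖ ^ 2 := inner_self_eq_norm_sq (𝕜 := ℂ) (V y)
    rw [inner_sub_left, inner_add_right, inner_add_right, Complex.sub_re, Complex.add_re,
      Complex.add_re, h2, h3, h4]
    ring
  rw [Complex.mul_im, Complex.I_re, Complex.I_im, h1, zero_mul, zero_add, one_mul, sub_nonneg]
  exact pow_le_pow_left₀ (norm_nonneg _) (hV y) 2

/-- Since `T + i` already maps the domain of the inverse Cayley transform onto the whole space, and
is injective for dissipative `T`, no dissipative extension can be proper. -/
lemma invCayley_isMaximalDissipative (hV : ∀ y, ‖V y‖ ≤ ‖y‖) :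
    (invCayley V h).IsMaximalDissipative := by
  refine ⟨invCayley_isDissipative hV, fun T hT hle => ?_⟩
  refine (LinearPMap.eq_of_le_of_domain_eq hle (le_antisymm hle.1 fun x hx => ?_)).symm
  -- `i (1 + V) y + i (1 - V) y = 2 i y`, so this `y` gives a vector of the smaller domain with the
  -- same image under `T + i` as `x`
  set y : E := (2 * Complex.I)⁻¹ • (T ⟨x, hx⟩ + Complex.I • x) with hy
  have h2 : (2 * Complex.I) • y = T ⟨x, hx⟩ + Complex.I • x := by
    rw [hy, smul_inv_smul₀]
    simp
  have hyd : y - V y ∈ (invCayley V h).domain := mem_invCayley_domain.2 ⟨y, rfl⟩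
  have hTy : T ⟨y - V y, hle.1 hyd⟩ = Complex.I • (y + V y) := by
    rw [← invCayley_apply (h := h) y hyd]
    exact (hle.2 rfl).symm
  set d : T.domain := ⟨x, hx⟩ - ⟨y - V y, hle.1 hyd⟩ with hd
  have hTd : T d = -(Complex.I • (d : E)) := by
    rw [hd, LinearPMap.map_sub, hTy, eq_sub_of_add_eq h2.symm, Submodule.coe_sub]
    module
  have h3 := hT d
  rw [hTd, inner_neg_right, inner_smul_right, inner_self_eq_norm_sq_to_K] at h3
  have h4 : (d : E) = 0 := by
    have h5 : 0 ≤ -(‖(d : E)‖ ^ 2) := by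
      have e : (-(Complex.I * ((‖(d : E)‖ : ℝ) : ℂ) ^ 2)).im = -(‖(d : E)‖ ^ 2) := by
        simp [← Complex.ofReal_pow]
      rw [← e]; exact h3
    exact norm_eq_zero.1 (by nlinarith [norm_nonneg (d : E)])
  rw [hd, Submodule.coe_sub, sub_eq_zero] at h4
  rw [show x = y - V y from h4]
  exact hyd

variable {W : E →ₗ[ℂ] E}

/-- The orthogonal complement of the domain is the kernel of `1 - W`, where `W` is the adjoint
of `V`. -/
lemma dense_invCayley_domain [CompleteSpace E] (hWV : ∀ x y, ⟪W x, y⟫ = ⟪x, V y⟫)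
    (hW : ∀ y, y - W y = 0 → y = 0) : Dense ((invCayley V h).domain : Set E) := by
  rw [Submodule.dense_iff_topologicalClosure_eq_top, Submodule.topologicalClosure_eq_top_iff,
    Submodule.eq_bot_iff]
  intro w hw
  refine hW w (ext_inner_right ℂ fun y => ?_)
  have := Submodule.inner_left_of_mem_orthogonal (mem_invCayley_domain.2 ⟨y, rfl⟩) hw
  rw [inner_sub_left, hWV, ← inner_sub_right, this, inner_zero_left]

/-- The adjoint of the inverse Cayley transform of `V` has domain `range (1 - W)`, where `W` is the
adjoint of `V`. -/
lemma mem_adjoint_invCayley_domain [CompleteSpace E] (hWV : ∀ x y, ⟪W x, y⟫ = ⟪x, V y⟫)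
    (hd : Dense ((invCayley V h).domain : Set E)) {x : E} :
    x ∈ (invCayley V h).adjoint.domain ↔ ∃ y, y - W y = x := by
  constructor
  · intro hx
    set z := (invCayley V h).adjoint ⟨x, hx⟩ with hz
    have key : ∀ y, ⟪z, y - V y⟫ = ⟪x, Complex.I • (y + V y)⟫ := by
      intro y
      have hyd : y - V y ∈ (invCayley V h).domain := mem_invCayley_domain.2 ⟨y, rfl⟩
      have := LinearPMap.adjoint_isFormalAdjoint hd ⟨x, hx⟩ ⟨y - V y, hyd⟩
      rwa [invCayley_apply] at this
    have hzx : z - W z = -(Complex.I • (x + W x)) := by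
      refine ext_inner_right ℂ fun y => ?_
      have := key y
      rw [inner_sub_right, inner_smul_right, inner_add_right] at this
      rw [inner_sub_left, inner_neg_left, inner_smul_left, inner_add_left, hWV, hWV, this,
        Complex.conj_I]
      ring
    -- `x + W x = i (z - W z)` amounts to `2 x = (1 - W) (x + i z)`
    refine ⟨(2⁻¹ : ℂ) • (x + Complex.I • z), ?_⟩
    have e : Complex.I • (z - W z) = x + W x := by
      rw [hzx, smul_neg, smul_smul, Complex.I_mul_I]; module
    rw [map_smul, map_add, map_smul]
    have e2 : (2⁻¹ : ℂ) • (x + Complex.I • z) - (2⁻¹ : ℂ) • (W x + Complex.I • W z)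
        = (2⁻¹ : ℂ) • (x - W x) + (2⁻¹ : ℂ) • (Complex.I • (z - W z)) := by module
    rw [e2, e]
    module
  · rintro ⟨w, rfl⟩
    refine LinearPMap.mem_adjoint_domain_of_exists _ ⟨-(Complex.I • (w + W w)), ?_⟩
    rintro ⟨x, hx⟩
    obtain ⟨y, rfl⟩ := mem_invCayley_domain.1 hx
    rw [invCayley_apply]
    simp only [inner_neg_left, inner_smul_left, inner_smul_right, inner_sub_left, inner_sub_right,
      inner_add_left, inner_add_right, hWV, Complex.conj_I]
    ring

end invCayley

end SecondKind

/-! ### Construction of the extension -/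

/-- Let `𝔖` be an infinite-dimensional separable complex Hilbert space, `K` a
closed subspace with infinite-dimensional orthogonal complement, and `S` a closed symmetric
operator in `𝔖` with `dom S ⊆ K` dense in `K` and `ran S ⊆ K`, whose deficiency subspaces
`N_i = K ∩ (ran (S + iI))ᗮ` and `N_{-i} = K ∩ (ran (S - iI))ᗮ` are both infinite-dimensional.
Then there exists a densely defined maximal dissipative extension `S̃` of `S` in `𝔖` with
`dom S̃ ∩ K = dom S̃* ∩ K = dom S` and `dom S̃ ∩ Kᗮ = dom S̃* ∩ Kᗮ = {0}`. -/
theorem exists_maximalDissipative_extension_second_kind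
    {𝔖 : Type*} [NormedAddCommGroup 𝔖] [InnerProductSpace ℂ 𝔖] [CompleteSpace 𝔖]
    [TopologicalSpace.SeparableSpace 𝔖] (hinf : ¬ FiniteDimensional ℂ 𝔖)
    (K : Submodule ℂ 𝔖) [CompleteSpace K] (hKperp : ¬ FiniteDimensional ℂ ↥Kᗮ)
    (S : 𝔖 →ₗ.[ℂ] 𝔖)
    (hsym : ∀ x y : S.domain, ⟪S x, (y : 𝔖)⟫ = ⟪(x : 𝔖), S y⟫)
    (hclosed : S.IsClosed)
    (hdomK : S.domain.topologicalClosure = K)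
    (hranK : ∀ x : S.domain, S x ∈ K)
    (hNi : ¬ FiniteDimensional ℂ
      ↥(K ⊓ (LinearMap.range (S.toFun + Complex.I • S.domain.subtype))ᗮ))
    (hNmi : ¬ FiniteDimensional ℂ
      ↥(K ⊓ (LinearMap.range (S.toFun - Complex.I • S.domain.subtype))ᗮ)) :
    ∃ St : 𝔖 →ₗ.[ℂ] 𝔖, S ≤ St ∧ Dense (St.domain : Set 𝔖) ∧ St.IsMaximalDissipative ∧
      St.domain ⊓ K = S.domain ∧ St.adjoint.domain ⊓ K = S.domain ∧
      St.domain ⊓ Kᗮ = ⊥ ∧ St.adjoint.domain ⊓ Kᗮ = ⊥ := by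
  have hDle : S.domain ≤ K := hdomK ▸ S.domain.le_topologicalClosure
  have hKc : IsClosed (K : Set 𝔖) := (completeSpace_coe_iff_isComplete.1 ‹_›).isClosed
  have : CompleteSpace ↥(K ⊓ (LinearMap.range (S.toFun + Complex.I • S.domain.subtype))ᗮ) :=
    (hKc.inter (Submodule.isClosed_orthogonal _)).completeSpace_coe
  have : CompleteSpace ↥(K ⊓ (LinearMap.range (S.toFun - Complex.I • S.domain.subtype))ᗮ) :=
    (hKc.inter (Submodule.isClosed_orthogonal _)).completeSpace_coe
  have hsc : SecondCountableTopology 𝔖 := UniformSpace.secondCountable_of_separable 𝔖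
  obtain ⟨bN⟩ := SecondKind.exists_hilbertBasis_nat hNi
  obtain ⟨bN'⟩ := SecondKind.exists_hilbertBasis_nat hNmi
  obtain ⟨bL⟩ := SecondKind.exists_hilbertBasis_nat hKperp
  obtain ⟨J, hJS, hJL⟩ := SecondKind.exists_cayley_extension hsym hclosed hDle hranK
    (bN.repr.trans bN'.repr.symm)
  set p : ℕ → 𝔖 := fun j => bN j with hp
  set q : ℕ → 𝔖 := fun k => bL k with hq
  have hpK : ∀ j, p j ∈ K := fun j => (bN j).2.1
  have hpM : ∀ j (f : S.domain), ⟪S f + Complex.I • (f : 𝔖), p j⟫ = 0 := fun j f =>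
    (bN j).2.2 _ ⟨f, rfl⟩
  have hqL : ∀ k, q k ∈ Kᗮ := fun k => (bL k).2
  obtain ⟨X, hXsym, hXn, hX0, hX1, hX2⟩ := SecondKind.exists_coupling (p := p) (q := q)
    (bN.orthonormal.comp_linearIsometry (Submodule.subtypeₗᵢ _))
    (bL.orthonormal.comp_linearIsometry (Submodule.subtypeₗᵢ _))
    (fun j k => hqL k _ (hpK j))
  have hpM' : ∀ (f : S.domain), S f + Complex.I • (f : 𝔖) ∈ K := fun f =>
    K.add_mem (hranK f) (K.smul_mem _ (hDle f.2))
  have hXM : ∀ f : S.domain, X (S f + Complex.I • (f : 𝔖)) = 0 := fun f =>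
    hX0 _ (fun j => inner_eq_zero_symm.1 (hpM j f))
      (fun k => inner_eq_zero_symm.1 (hqL k _ (hpM' f)))
  have hp0 : ∀ n ∈ K, (∀ f : S.domain, ⟪S f + Complex.I • (f : 𝔖), n⟫ = 0) →
      (∀ j, ⟪p j, n⟫ = 0) → n = 0 := by
    intro n hn hn' hpn
    have hnN : n ∈ K ⊓ (LinearMap.range (S.toFun + Complex.I • S.domain.subtype))ᗮ :=
      ⟨hn, by rintro _ ⟨f, rfl⟩; exact hn' f⟩
    exact congrArg Subtype.val (SecondKind.eq_zero_of_forall_inner bN (x := ⟨n, hnN⟩) hpn)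
  have hq0 : ∀ l ∈ Kᗮ, (∀ k, ⟪q k, l⟫ = 0) → l = 0 := by
    intro l hl hql
    exact congrArg Subtype.val (SecondKind.eq_zero_of_forall_inner bL (x := ⟨l, hl⟩) hql)
  have hJK : ∀ l ∈ Kᗮ, ∀ x, ⟪l, J x⟫ = ⟪l, x⟫ := fun l hl x => by
    conv_lhs => rw [← hJL l hl]
    exact J.inner_map_map l x
  have hJsub : ∀ x, J x - x ∈ K := by
    intro x
    rw [← K.orthogonal_orthogonal]
    intro l hl
    rw [inner_sub_right, hJK l hl, sub_self]
  have hJperp : ∀ v, (∀ g : S.domain, ⟪S g + Complex.I • (g : 𝔖), v⟫ = 0) →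
      ∀ g : S.domain, ⟪S g - Complex.I • (g : 𝔖), J v⟫ = 0 := by
    intro v hv g
    rw [← hJS, J.inner_map_map, hv]
  have hJperp' : ∀ v, (∀ g : S.domain, ⟪S g - Complex.I • (g : 𝔖), J v⟫ = 0) →
      ∀ g : S.domain, ⟪S g + Complex.I • (g : 𝔖), v⟫ = 0 := by
    intro v hv g
    rw [← J.inner_map_map, hJS, hv]
  have hXperp : ∀ v, (∀ g : S.domain, ⟪S g + Complex.I • (g : 𝔖), v⟫ = 0) →
      ∀ g : S.domain, ⟪S g + Complex.I • (g : 𝔖), v - X v⟫ = 0 := by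
    intro v hv g
    rw [inner_sub_right, hv, ← hXsym, hXM, inner_zero_left, sub_zero]
  have hXK : ∀ v, (∀ g : S.domain, ⟪S g + Complex.I • (g : 𝔖), v⟫ = 0) → X v ∈ K → v = 0 := by
    intro v hv hXv
    obtain ⟨hpv, hqv⟩ := hX1 v fun k => inner_eq_zero_symm.1 (hqL k _ hXv)
    obtain ⟨n, hn, l, hl, rfl⟩ := K.exists_add_mem_mem_orthogonal v
    have hn0 : n = 0 := hp0 n hn
      (fun f => by simpa [inner_add_right, hl _ (hpM' f)] using hv f)
      (fun j => by simpa [inner_add_right, hl _ (hpK j)] using hpv j)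
    have hl0 : l = 0 := hq0 l hl fun k => by simpa [hn0] using hqv k
    rw [hn0, hl0, add_zero]
  have hXL : ∀ l ∈ Kᗮ, X l ∈ Kᗮ → l = 0 := fun l hl hXl =>
    hq0 l hl (hX2 l (fun j => hl _ (hpK j)) (fun j => hXl _ (hpK j)))
  have hMc : CompleteSpace ↥(LinearMap.range (S.toFun + Complex.I • S.domain.subtype)) :=
    (SecondKind.isClosed_range_add_smul hclosed hsym (Or.inl rfl)).completeSpace_coe
  have hdec : ∀ y, ∃ (f : S.domain) (v : 𝔖), y = S f + Complex.I • (f : 𝔖) + v ∧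
      ∀ g : S.domain, ⟪S g + Complex.I • (g : 𝔖), v⟫ = 0 := by
    intro y
    obtain ⟨_, ⟨f, rfl⟩, v, hv, rfl⟩ := (LinearMap.range
      (S.toFun + Complex.I • S.domain.subtype)).exists_add_mem_mem_orthogonal y
    exact ⟨f, v, rfl, fun g => hv _ ⟨g, rfl⟩⟩
  -- the Cayley transform `V = J (1 - X)` of the extension, and its adjoint `W`
  let R : 𝔖 →ₗ[ℂ] 𝔖 := LinearMap.id - X.toLinearMap
  let V : 𝔖 →ₗ[ℂ] 𝔖 := J.toLinearEquiv.toLinearMap ∘ₗ R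
  let W : 𝔖 →ₗ[ℂ] 𝔖 := R ∘ₗ J.symm.toLinearEquiv.toLinearMap
  have hV : ∀ y, V y = J (y - X y) := fun y => rfl
  have hW : ∀ y, W y = J.symm y - X (J.symm y) := fun y => rfl
  have hVS : ∀ f : S.domain, V (S f + Complex.I • (f : 𝔖)) = S f - Complex.I • (f : 𝔖) := by
    intro f
    rw [hV, hXM, sub_zero, hJS]
  have hWS : ∀ f : S.domain, W (S f - Complex.I • (f : 𝔖)) = S f + Complex.I • (f : 𝔖) := by
    intro f
    rw [hW, ← hJS, J.symm_apply_apply, hXM, sub_zero]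
  have hWV : ∀ x y, ⟪W x, y⟫ = ⟪x, V y⟫ := by
    intro x y
    obtain ⟨u, rfl⟩ := J.surjective x
    rw [hW, hV, J.inner_map_map, J.symm_apply_apply, inner_sub_left, hXsym, inner_sub_right]
  have hVn : ∀ y, ‖V y‖ ≤ ‖y‖ := fun y => by
    rw [hV, J.norm_map]
    exact hXn y
  obtain ⟨hVK, hVL⟩ := SecondKind.range_sub_inf (A := S.toFun) (V := V) hsym hdomK hranK
    (map_add V) hVS hdec (fun v hv => hJperp _ (hXperp v hv))
    (fun v hv hvK => by
      refine hXK v hv ?_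
      have e : X v = v - V v + (J v - v) - (J (X v) - X v) := by
        rw [hV, map_sub]; abel
      rw [e]
      exact K.sub_mem (K.add_mem hvK (hJsub _)) (hJsub _))
    (fun l hl hVl => by
      refine hXL l hl ?_
      have hz : J (X l) ∈ Kᗮ := by
        have e : J (X l) = l - V l := by rw [hV, map_sub, hJL l hl]; abel
        rw [e]
        exact Kᗮ.sub_mem hl hVl
      have := J.injective (hJL _ hz)
      rwa [this] at hz)
  -- `W` plays for `-S` the role that `V` plays for `S`
  have hnegp : ∀ g : S.domain, (-S.toFun) g + Complex.I • (g : 𝔖)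
      = -(S g - Complex.I • (g : 𝔖)) := by
    intro g
    change -S g + Complex.I • (g : 𝔖) = _
    abel
  have hnegm : ∀ g : S.domain, (-S.toFun) g - Complex.I • (g : 𝔖)
      = -(S g + Complex.I • (g : 𝔖)) := by
    intro g
    change -S g - Complex.I • (g : 𝔖) = _
    abel
  have hperp : ∀ v, (∀ g : S.domain, ⟪(-S.toFun) g + Complex.I • (g : 𝔖), v⟫ = 0) →
      ∀ g : S.domain, ⟪S g + Complex.I • (g : 𝔖), J.symm v⟫ = 0 := by
    intro v hv
    refine hJperp' _ fun g => ?_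
    have := hv g
    rwa [hnegp, inner_neg_left, neg_eq_zero, ← J.apply_symm_apply v] at this
  obtain ⟨hWK, hWL⟩ := SecondKind.range_sub_inf (A := -S.toFun) (V := W)
    (fun x y => by
      change ⟪-S x, (y : 𝔖)⟫ = ⟪(x : 𝔖), -S y⟫
      rw [inner_neg_left, inner_neg_right, hsym])
    hdomK (fun x => K.neg_mem (hranK x)) (map_add W)
    (fun f => by rw [hnegp, hnegm, map_neg, hWS])
    (fun y => by
      obtain ⟨f, v, hfv, hv⟩ := hdec (J.symm y)
      refine ⟨-f, J v, ?_, fun g => ?_⟩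
      · rw [← J.apply_symm_apply y, hfv, map_add, hJS, hnegp, LinearPMap.map_neg, Submodule.coe_neg]
        module
      · rw [hnegp, inner_neg_left, hJperp v hv, neg_zero])
    (fun v hv g => by
      rw [hnegm, inner_neg_left, hW, hXperp _ (hperp v hv), neg_zero])
    (fun v hv hvK => by
      have h0 : J.symm v = 0 := by
        refine hXK _ (hperp v hv) ?_
        have e : X (J.symm v) = v - W v - (J (J.symm v) - J.symm v) := by
          rw [hW, J.apply_symm_apply]; abel
        rw [e]
        exact K.sub_mem hvK (hJsub _)
      rw [← J.apply_symm_apply v, h0, map_zero])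
    (fun l hl hWl => by
      have hJl : J.symm l = l := by rw [J.symm_apply_eq, hJL l hl]
      refine hXL l hl ?_
      have e : X l = l - W l := by rw [hW, hJl]; abel
      rw [e]
      exact Kᗮ.sub_mem hl hWl)
  have hinj : Function.Injective (LinearMap.id - V : 𝔖 →ₗ[ℂ] 𝔖) := by
    refine (injective_iff_map_eq_zero _).2 fun y hy => hVL y ?_
    rw [show y - V y = 0 from hy]
    exact Kᗮ.zero_mem
  have hdense : Dense ((SecondKind.invCayley V hinj).domain : Set 𝔖) :=
    SecondKind.dense_invCayley_domain hWV fun y hy => hWL y (hy ▸ Kᗮ.zero_mem)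
  have hI : (2 * Complex.I) ≠ 0 := by simp
  have hfV : ∀ f : S.domain, (2 * Complex.I)⁻¹ • (S f + Complex.I • (f : 𝔖))
      - V ((2 * Complex.I)⁻¹ • (S f + Complex.I • (f : 𝔖))) = f := by
    intro f
    rw [map_smul, hVS, ← smul_sub, inv_smul_eq_iff₀ hI]
    module
  have hfW : ∀ f : S.domain, -(2 * Complex.I)⁻¹ • (S f - Complex.I • (f : 𝔖))
      - W (-(2 * Complex.I)⁻¹ • (S f - Complex.I • (f : 𝔖))) = f := by
    intro f
    rw [map_smul, hWS, ← smul_sub, neg_smul, ← smul_neg, inv_smul_eq_iff₀ hI]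
    module
  have hSdom : S.domain ≤ (SecondKind.invCayley V hinj).domain := fun f hf =>
    SecondKind.mem_invCayley_domain.2 ⟨_, hfV ⟨f, hf⟩⟩
  refine ⟨SecondKind.invCayley V hinj, ⟨hSdom, ?_⟩, hdense,
    SecondKind.invCayley_isMaximalDissipative hVn, ?_, ?_, ?_, ?_⟩
  · rintro f ⟨x, hx⟩ hfx
    have hx' : x = _ := hfx.symm.trans (hfV f).symm
    subst hx'
    rw [SecondKind.invCayley_apply, map_smul, hVS, ← smul_add, smul_smul]
    have e : S f + Complex.I • (f : 𝔖) + (S f - Complex.I • (f : 𝔖)) = (2 : ℂ) • S f := by module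
    rw [e, smul_smul]
    have e2 : Complex.I * (2 * Complex.I)⁻¹ * 2 = 1 := by field_simp
    rw [e2, one_smul]
  · refine le_antisymm ?_ (le_inf hSdom hDle)
    rintro x ⟨hx, hxK⟩
    obtain ⟨y, rfl⟩ := SecondKind.mem_invCayley_domain.1 hx
    exact hVK y hxK
  · refine le_antisymm ?_ (le_inf (fun f hf => ?_) hDle)
    · rintro x ⟨hx, hxK⟩
      obtain ⟨y, rfl⟩ := (SecondKind.mem_adjoint_invCayley_domain hWV hdense).1 hx
      exact hWK y hxK
    · exact (SecondKind.mem_adjoint_invCayley_domain hWV hdense).2 ⟨_, hfW ⟨f, hf⟩⟩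
  · refine (Submodule.eq_bot_iff _).2 ?_
    rintro x ⟨hx, hxK⟩
    obtain ⟨y, rfl⟩ := SecondKind.mem_invCayley_domain.1 hx
    rw [hVL y hxK, map_zero, sub_zero]
  · refine (Submodule.eq_bot_iff _).2 ?_
    rintro x ⟨hx, hxK⟩
    obtain ⟨y, rfl⟩ := (SecondKind.mem_adjoint_invCayley_domain hWV hdense).1 hx
    rw [hWL y hxK, map_zero, sub_zero]
end
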